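/- arXiv:2202.08000 — 6 statements merged into one kernel-verified Lean document; each statement's English description precedes it below -/
import Mathlib

section
/- The Cantor ternary set satisfies C + C = [0,2], i.e., the set of all sums x + y with x, y in the Cantor set equals the closed interval [0,2]. -/
open Pointwise

/-!
Halving a point of `[0, 2]` gives `x ∈ [0, 1]`, which has a ternary expansion. Each ternary digit
`0`, `1`, `2` is the average of two digits from `{0, 2}`, as `1 = (0 + 2) / 2`.
Averaging digit by digit involves no carries, so `x` is the midpoint of two points of the
Cantor set.
-/

theorem ofDigits_add_ofDigits_congr {b : ℕ} {u v w z : ℕ → Fin b}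
    (h : ∀ i, (u i : ℕ) + v i = w i + z i) :
    Real.ofDigits u + Real.ofDigits v = Real.ofDigits w + Real.ofDigits z := by
  have terms_eq (i : ℕ) : Real.ofDigitsTerm u i + Real.ofDigitsTerm v i =
      Real.ofDigitsTerm w i + Real.ofDigitsTerm z i := by
    have digits_eq : (u i : ℝ) + v i = w i + z i := mod_cast h i
    simp only [Real.ofDigitsTerm, ← add_mul, digits_eq]
  simp only [Real.ofDigits, ← Real.summable_ofDigitsTerm.tsum_add Real.summable_ofDigitsTerm,
    terms_eq]

theorem exists_fin_three_ne_one_add_eq_add_self (d : Fin 3) :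
    ∃ u v : Fin 3, u ≠ 1 ∧ v ≠ 1 ∧ (u : ℕ) + v = d + d := by
  decide +revert

theorem exists_mem_cantorSet_add_eq_add_self {x : ℝ} (hx : x ∈ Set.Icc 0 1) :
    ∃ y ∈ cantorSet, ∃ z ∈ cantorSet, y + z = x + x := by
  obtain ⟨d, -, rfl⟩ := Real.ofDigits_SurjOn (b := 3) (by norm_num) hx
  choose u v hu hv huv using fun i ↦ exists_fin_three_ne_one_add_eq_add_self (d i)
  exact ⟨Real.ofDigits u, ofDigits_zero_two_sequence_mem_cantorSet hu,
    Real.ofDigits v, ofDigits_zero_two_sequence_mem_cantorSet hv,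
    ofDigits_add_ofDigits_congr huv⟩

/-- The Cantor ternary set satisfies `C + C = [0, 2]`. -/
theorem cantorSet_add_cantorSet : cantorSet + cantorSet = Set.Icc (0 : ℝ) 2 := by
  apply Set.Subset.antisymm
  · calc
      cantorSet + cantorSet ⊆ Set.Icc 0 1 + Set.Icc 0 1 :=
        Set.add_subset_add cantorSet_subset_unitInterval cantorSet_subset_unitInterval
      _ ⊆ Set.Icc (0 + 0) (1 + 1) := Set.Icc_add_Icc_subset 0 1 0 1
      _ = Set.Icc 0 2 := by norm_num
  · rintro t ⟨ht₀, ht₂⟩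
    have half_mem : t / 2 ∈ Set.Icc (0 : ℝ) 1 := ⟨by linarith, by linarith⟩
    obtain ⟨y, hy, z, hz, hyz⟩ := exists_mem_cantorSet_add_eq_add_self half_mem
    exact ⟨y, hy, z, hz, hyz.trans (add_halves t)⟩
end

section
/- Let (a_i, b_i), i ∈ ℕ, be a countable family of pairwise disjoint open intervals contained in [0, M], and let g : [0, M] → ℝ satisfy g(x) = (4 / (b_i − a_i)^{1/2}) · min(x − a_i, b_i − x) for x ∈ (a_i, b_i) and g(x) = 0 for x outside the union of the intervals. Then g is 1/2-Hölder continuous on [0, M] with constant 4: |g(x) − g(y)| ≤ 4 · |x − y|^{1/2} for all x, y ∈ [0, M]. -/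
/-!
On an interval of length `L` the tent takes values in `[0, L]` and is `1`-Lipschitz, so it
oscillates between `x` and `y` by at most `min L |x - y| ≤ L ^ (1 - α) * |x - y| ^ α`; dividing by
`L ^ (1 - α)` makes the Hölder constant independent of the interval. As the tents are nonnegative,
`g` dominates each of them while agreeing with one of them at every point where it is nonzero, so
it oscillates no more than they do.
-/

open Set

section Gluing

variable {X ι R : Type*} {s : Set X} {U : ι → Set X} {f : ι → X → R} {g : X → R} {x y : X} {ε : R}

section Preorder

variable [Zero R] [Preorder R]

lemma nonneg_of_piecewise (hf_nonneg : ∀ i x, 0 ≤ f i x)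
    (hgf : ∀ i, ∀ x ∈ s ∩ U i, g x = f i x) (hg_zero : ∀ x ∈ s, x ∉ ⋃ i, U i → g x = 0)
    (hx : x ∈ s) : 0 ≤ g x := by
  by_cases hxU : x ∈ ⋃ i, U i
  · obtain ⟨i, hi⟩ := mem_iUnion.1 hxU
    exact hgf i x ⟨hx, hi⟩ ▸ hf_nonneg i x
  · exact (hg_zero x hx hxU).ge

lemma le_of_piecewise (hf_nonneg : ∀ i x, 0 ≤ f i x) (hf_zero : ∀ i, ∀ x ∉ U i, f i x = 0)
    (hgf : ∀ i, ∀ x ∈ s ∩ U i, g x = f i x) (hg_zero : ∀ x ∈ s, x ∉ ⋃ i, U i → g x = 0)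
    (hx : x ∈ s) (i : ι) : f i x ≤ g x := by
  by_cases hi : x ∈ U i
  · exact (hgf i x ⟨hx, hi⟩).ge
  · exact (hf_zero i x hi).trans_le (nonneg_of_piecewise hf_nonneg hgf hg_zero hx)

end Preorder

variable [AddCommGroup R] [LinearOrder R] [IsOrderedAddMonoid R]

lemma sub_le_of_piecewise (hf_nonneg : ∀ i x, 0 ≤ f i x) (hf_zero : ∀ i, ∀ x ∉ U i, f i x = 0)
    (hgf : ∀ i, ∀ x ∈ s ∩ U i, g x = f i x) (hg_zero : ∀ x ∈ s, x ∉ ⋃ i, U i → g x = 0)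
    (hx : x ∈ s) (hy : y ∈ s) (hε : 0 ≤ ε) (hf : ∀ i, f i x - f i y ≤ ε) :
    g x - g y ≤ ε := by
  by_cases hxU : x ∈ ⋃ i, U i
  · obtain ⟨i, hi⟩ := mem_iUnion.1 hxU
    calc g x - g y = f i x - g y := by rw [hgf i x ⟨hx, hi⟩]
      _ ≤ f i x - f i y := sub_le_sub_left (le_of_piecewise hf_nonneg hf_zero hgf hg_zero hy i) _
      _ ≤ ε := hf i
  · calc g x - g y = 0 - g y := by rw [hg_zero x hx hxU]
      _ ≤ 0 := sub_nonpos.2 (nonneg_of_piecewise hf_nonneg hgf hg_zero hy)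
      _ ≤ ε := hε

lemma abs_sub_le_of_piecewise (hf_nonneg : ∀ i x, 0 ≤ f i x) (hf_zero : ∀ i, ∀ x ∉ U i, f i x = 0)
    (hgf : ∀ i, ∀ x ∈ s ∩ U i, g x = f i x) (hg_zero : ∀ x ∈ s, x ∉ ⋃ i, U i → g x = 0)
    (hx : x ∈ s) (hy : y ∈ s) (hε : 0 ≤ ε) (hf : ∀ i, |f i x - f i y| ≤ ε) :
    |g x - g y| ≤ ε :=
  abs_sub_le_iff.2
    ⟨sub_le_of_piecewise hf_nonneg hf_zero hgf hg_zero hx hy hε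
      fun i ↦ (abs_sub_le_iff.1 (hf i)).1,
    sub_le_of_piecewise hf_nonneg hf_zero hgf hg_zero hy hx hε
      fun i ↦ (abs_sub_le_iff.1 (hf i)).2⟩

end Gluing

lemma le_rpow_mul_rpow_of_le_of_le {m L d α : ℝ} (hm : 0 ≤ m) (hmL : m ≤ L) (hmd : m ≤ d)
    (hα₀ : 0 ≤ α) (hα₁ : α ≤ 1) : m ≤ L ^ (1 - α) * d ^ α := by
  have hα : 0 ≤ 1 - α := sub_nonneg.2 hα₁
  calc m = m ^ (1 - α) * m ^ α := by
        rw [← Real.rpow_add_of_nonneg hm hα hα₀, sub_add_cancel, Real.rpow_one]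
    _ ≤ L ^ (1 - α) * d ^ α := by
        have hL : 0 ≤ L := hm.trans hmL
        gcongr

/-- The tent function of the interval `(a, b)`: the distance to `{a, b}` on the interval, extended
by zero to the whole line. It vanishes identically when `b ≤ a`. -/
def tent (a b x : ℝ) : ℝ :=
  max 0 (min (x - a) (b - x))

section Tent

variable {a b x : ℝ}

lemma tent_nonneg (a b x : ℝ) : 0 ≤ tent a b x :=
  le_max_left _ _

lemma tent_of_mem_Ioo (hx : x ∈ Ioo a b) : tent a b x = min (x - a) (b - x) :=
  max_eq_right (le_min (sub_nonneg.2 hx.1.le) (sub_nonneg.2 hx.2.le))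

lemma tent_of_notMem_Ioo (hx : x ∉ Ioo a b) : tent a b x = 0 := by
  refine max_eq_left (min_le_iff.2 ?_)
  rwa [mem_Ioo, not_and_or, not_lt, not_lt, ← sub_nonpos, ← sub_nonpos (a := b)] at hx

lemma tent_of_le (hba : b ≤ a) (x : ℝ) : tent a b x = 0 :=
  tent_of_notMem_Ioo (by simp [Ioo_eq_empty_of_le hba])

lemma tent_le_length (hab : a ≤ b) (x : ℝ) : tent a b x ≤ b - a := by
  by_cases hx : x ∈ Ioo a b
  · rw [tent_of_mem_Ioo hx]
    exact min_le_of_left_le (sub_le_sub_right hx.2.le a)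
  · rw [tent_of_notMem_Ioo hx]
    exact sub_nonneg.2 hab

lemma abs_tent_sub_tent_le_length (hab : a ≤ b) (x y : ℝ) :
    |tent a b x - tent a b y| ≤ b - a :=
  abs_sub_le_of_nonneg_of_le (tent_nonneg a b x) (tent_le_length hab x)
    (tent_nonneg a b y) (tent_le_length hab y)

lemma abs_tent_sub_tent_le_abs_sub (a b x y : ℝ) : |tent a b x - tent a b y| ≤ |x - y| :=
  calc |tent a b x - tent a b y|
      ≤ |min (x - a) (b - x) - min (y - a) (b - y)| := by
        simpa only [tent, max_comm (0 : ℝ)] using abs_max_sub_max_le_abs _ _ _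
    _ ≤ max |(x - a) - (y - a)| |(b - x) - (b - y)| := abs_min_sub_min_le_max _ _ _ _
    _ = |x - y| := by
        rw [sub_sub_sub_cancel_right, sub_sub_sub_cancel_left, abs_sub_comm y x, max_self]

lemma abs_tent_sub_tent_le_rpow {α : ℝ} (hα₀ : 0 ≤ α) (hα₁ : α ≤ 1) (hab : a ≤ b) (x y : ℝ) :
    |tent a b x - tent a b y| ≤ (b - a) ^ (1 - α) * |x - y| ^ α :=
  le_rpow_mul_rpow_of_le_of_le (abs_nonneg _) (abs_tent_sub_tent_le_length hab x y)
    (abs_tent_sub_tent_le_abs_sub a b x y) hα₀ hα₁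

end Tent

/-- The tent function of `(a, b)`, rescaled so that `C` is an `α`-Hölder constant for it whatever
the length of the interval. -/
noncomputable def holderTent (C α a b x : ℝ) : ℝ :=
  C / (b - a) ^ (1 - α) * tent a b x

section HolderTent

variable {C α : ℝ}

lemma holderTent_nonneg (hC : 0 ≤ C) (α a b x : ℝ) : 0 ≤ holderTent C α a b x := by
  rcases le_or_gt b a with hba | hab
  · rw [holderTent, tent_of_le hba, mul_zero]
  · exact mul_nonneg (div_nonneg hC (Real.rpow_nonneg (sub_nonneg.2 hab.le) _)) (tent_nonneg a b x)

lemma abs_holderTent_sub_holderTent_le (hC : 0 ≤ C) (hα₀ : 0 ≤ α) (hα₁ : α ≤ 1) (a b x y : ℝ) :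
    |holderTent C α a b x - holderTent C α a b y| ≤ C * |x - y| ^ α := by
  rcases le_or_gt b a with hba | hab
  · simp only [holderTent, tent_of_le hba, mul_zero, sub_zero, abs_zero]
    positivity
  · have hL : 0 < (b - a) ^ (1 - α) := Real.rpow_pos_of_pos (sub_pos.2 hab) _
    calc |holderTent C α a b x - holderTent C α a b y|
        = C / (b - a) ^ (1 - α) * |tent a b x - tent a b y| := by
          rw [holderTent, holderTent, ← mul_sub, abs_mul, abs_of_nonneg (div_nonneg hC hL.le)]
      _ ≤ C / (b - a) ^ (1 - α) * ((b - a) ^ (1 - α) * |x - y| ^ α) := by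
          gcongr
          exact abs_tent_sub_tent_le_rpow hα₀ hα₁ hab.le x y
      _ = C * |x - y| ^ α := by rw [← mul_assoc, div_mul_cancel₀ C hL.ne']

end HolderTent

theorem tent_family_holder_general {ι : Type*} {s : Set ℝ} {a b : ι → ℝ} {C α : ℝ} (hC : 0 ≤ C)
    (hα₀ : 0 ≤ α) (hα₁ : α ≤ 1) {g : ℝ → ℝ}
    (hg_tent : ∀ i, ∀ x ∈ s ∩ Ioo (a i) (b i),
      g x = C / (b i - a i) ^ (1 - α) * min (x - a i) (b i - x))
    (hg_zero : ∀ x ∈ s, x ∉ ⋃ i, Ioo (a i) (b i) → g x = 0) :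
    ∀ x ∈ s, ∀ y ∈ s, |g x - g y| ≤ C * |x - y| ^ α := by
  intro x hx y hy
  have h_agree : ∀ i, ∀ z ∈ s ∩ Ioo (a i) (b i), g z = holderTent C α (a i) (b i) z :=
    fun i z hz ↦ by rw [hg_tent i z hz, holderTent, tent_of_mem_Ioo hz.2]
  have h_vanish : ∀ i, ∀ z ∉ Ioo (a i) (b i), holderTent C α (a i) (b i) z = 0 :=
    fun i z hz ↦ by rw [holderTent, tent_of_notMem_Ioo hz, mul_zero]
  exact abs_sub_le_of_piecewise (fun i z ↦ holderTent_nonneg hC α (a i) (b i) z) h_vanish h_agree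
    hg_zero hx hy (by positivity)
    fun i ↦ abs_holderTent_sub_holderTent_le hC hα₀ hα₁ (a i) (b i) x y

/-- If `g : [0, M] → ℝ` vanishes off a countable pairwise disjoint family of open
intervals `(a i, b i) ⊆ [0, M]` and on each `(a i, b i)` equals the tent function
`(4 / (b i - a i)^{1/2}) * min (x - a i) (b i - x)`, then `g` is `1/2`-Hölder
continuous on `[0, M]` with constant `4`. -/
theorem tent_family_holder (M : ℝ) (hM : 0 < M) (a b : ℕ → ℝ)
    (hab : ∀ i, a i < b i)
    (hsub : ∀ i, Set.Ioo (a i) (b i) ⊆ Set.Icc 0 M)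
    (hdisj : Pairwise (Function.onFun Disjoint (fun i => Set.Ioo (a i) (b i))))
    (g : ℝ → ℝ)
    (hg_tent : ∀ i, ∀ x ∈ Set.Ioo (a i) (b i),
      g x = (4 / (b i - a i) ^ ((1 : ℝ) / 2)) * min (x - a i) (b i - x))
    (hg_zero : ∀ x ∈ Set.Icc 0 M, x ∉ ⋃ i, Set.Ioo (a i) (b i) → g x = 0) :
    ∀ x ∈ Set.Icc 0 M, ∀ y ∈ Set.Icc 0 M,
      |g x - g y| ≤ 4 * |x - y| ^ ((1 : ℝ) / 2) :=
  tent_family_holder_general (by norm_num) (by norm_num) (by norm_num)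
    (fun i x hx ↦ by rw [hg_tent i x hx.2, sub_half]) hg_zero
end

section
/- Let M = 1 / (3^{2/3} − 2). There exists a strictly increasing function f : [0, M] → [0, 1] such that: f is continuously differentiable; its derivative f′ is 1/2-Hölder continuous with constant 4; f(0) = 0 and f(M) = 1; the set A = {x ∈ [0, M] : f′(x) = 0} has Lebesgue measure zero; and the image f(A) equals the Cantor ternary set C. -/
open MeasureTheory

/-!
Fix `q > 2` and `M = 1 / (q - 2)`, so that `[0, qM]` splits as `[0, M] ∪ [M, M + 1] ∪ [M + 1, qM]`.
The derivative `G` is the least nonnegative solution of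
`G x = (q / 3) (G (q x) + g (q x - M) + G (q x - (M + 1)))`, where `g` is a bump of integral `1` on
the middle interval. The three summands live on adjacent intervals, so their sum is as Hölder as
each of them, and the factor `q / 3` compensates the dilation by `q` as soon as `q ^ (1 + r) ≤ 3`.

The zero set `A` of `G` is the union of two copies of itself scaled by `1 / q < 1 / 2`, hence null.
The primitive `f` of `G` conjugates these two similarities to `y ↦ y / 3` and `y ↦ (2 + y) / 3`, so
`f '' A` is a nonempty compact set solving the equation that characterizes the Cantor set.
-/

section Attractor

open Set Filter Topology Bornology
open scoped NNReal

variable {α : Type*} [PseudoMetricSpace α] {Φ : Set (α → α)} {c : ℝ≥0} {K L : Set α}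

theorem subset_of_subset_biUnion_image_of_mapsTo (hc : c < 1) (hΦ : ∀ φ ∈ Φ, LipschitzWith c φ)
    (hK : IsBounded K) (hKΦ : K ⊆ ⋃ φ ∈ Φ, φ '' K)
    (hL : IsClosed L) (hL₀ : L.Nonempty) (hLΦ : ∀ φ ∈ Φ, MapsTo φ L L) : K ⊆ L := by
  obtain ⟨z, hz⟩ := hL₀
  obtain ⟨R, hR⟩ := hK.subset_closedBall z
  have approx (n : ℕ) : ∀ x ∈ K, ∃ a ∈ L, dist x a ≤ c ^ n * R := by
    induction n with
    | zero => exact fun x hx ↦ ⟨z, hz, by simpa using hR hx⟩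
    | succ n ih =>
      intro x hx
      obtain ⟨φ, hφ, y, hy, rfl⟩ := mem_iUnion₂.1 (hKΦ hx)
      obtain ⟨a, ha, hya⟩ := ih y hy
      refine ⟨φ a, hLΦ φ hφ ha, ((hΦ φ hφ).dist_le_mul y a).trans ?_⟩
      rw [pow_succ', mul_assoc]
      gcongr
  intro x hx
  choose a haL hxa using fun n ↦ approx n x hx
  refine hL.mem_of_tendsto (b := atTop) ?_ (Eventually.of_forall haL)
  rw [tendsto_iff_dist_tendsto_zero]
  refine squeeze_zero (fun _ ↦ dist_nonneg) (fun n ↦ (dist_comm _ _).trans_le (hxa n)) ?_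
  simpa using (tendsto_pow_atTop_nhds_zero_of_lt_one c.2 hc).mul_const R

theorem eq_of_eq_biUnion_image (hc : c < 1) (hΦ : ∀ φ ∈ Φ, LipschitzWith c φ)
    (hK : IsBounded K) (hKc : IsClosed K) (hK₀ : K.Nonempty) (hKΦ : K = ⋃ φ ∈ Φ, φ '' K)
    (hL : IsBounded L) (hLc : IsClosed L) (hL₀ : L.Nonempty) (hLΦ : L = ⋃ φ ∈ Φ, φ '' L) :
    K = L := by
  have mapsTo {S : Set α} (hS : S = ⋃ φ ∈ Φ, φ '' S) : ∀ φ ∈ Φ, MapsTo φ S S := fun φ hφ x hx ↦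
    hS ▸ mem_biUnion hφ (mem_image_of_mem φ hx)
  exact (subset_of_subset_biUnion_image_of_mapsTo hc hΦ hK hKΦ.subset hLc hL₀ (mapsTo hLΦ)).antisymm
    (subset_of_subset_biUnion_image_of_mapsTo hc hΦ hL hLΦ.subset hKc hK₀ (mapsTo hKΦ))

theorem eq_cantorSet_of_eq_union_halves {K : Set ℝ} (hK : IsCompact K) (hK₀ : K.Nonempty)
    (h : K = (· / 3) '' K ∪ (fun x ↦ (2 + x) / 3) '' K) : K = cantorSet := by
  have hΦ : ∀ φ ∈ ({(· / 3), fun x ↦ (2 + x) / 3} : Set (ℝ → ℝ)), LipschitzWith (1 / 3) φ := by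
    rintro φ (rfl | rfl) <;> refine LipschitzWith.of_dist_le_mul fun x y ↦ le_of_eq ?_
    all_goals
      simp only [Real.dist_eq, add_div, add_sub_add_left_eq_sub, ← sub_div, abs_div]
      norm_num
      ring
  refine eq_of_eq_biUnion_image (by norm_num) hΦ hK.isBounded hK.isClosed hK₀ ?_
    isCompact_cantorSet.isBounded isClosed_cantorSet ⟨0, zero_mem_cantorSet⟩ ?_
  · rwa [biUnion_pair]
  · rw [biUnion_pair]
    exact cantorSet_eq_union_halves

end Attractor

section RealLine

open Set

theorem volume_eq_zero_of_subset_union_image_div {q s : ℝ} {A : Set ℝ} (hq : 2 < q)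
    (hA : volume A ≠ ⊤) (h : A ⊆ (· / q) '' A ∪ (fun a ↦ (s + a) / q) '' A) : volume A = 0 := by
  have volume_div : volume ((· / q) '' A) = ENNReal.ofReal q⁻¹ * volume A := by
    have : (· / q) '' A = AffineMap.homothety (0 : ℝ) q⁻¹ '' A := by
      ext
      simp [AffineMap.homothety_apply, div_eq_inv_mul]
    rw [this, Measure.addHaar_image_homothety]
    simp [abs_of_pos (by linarith : 0 < q)]
  have volume_add_div : volume ((fun a ↦ (s + a) / q) '' A) = ENNReal.ofReal q⁻¹ * volume A := by
    have : (fun a ↦ (s + a) / q) '' A = (s / q + ·) '' ((· / q) '' A) := by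
      simp only [image_image, add_div]
    rw [this, image_add_left, measure_preimage_add, volume_div]
  have hle : volume A ≤ ENNReal.ofReal (2 * q⁻¹) * volume A :=
    calc volume A ≤ ENNReal.ofReal q⁻¹ * volume A + ENNReal.ofReal q⁻¹ * volume A := by
          nth_rw 2 [← volume_add_div]
          rw [← volume_div]
          exact (measure_mono h).trans (measure_union_le _ _)
      _ = ENNReal.ofReal (2 * q⁻¹) * volume A := by
          rw [← add_mul, ← ENNReal.ofReal_add (by positivity) (by positivity), two_mul]
  have hlt : ENNReal.ofReal (2 * q⁻¹) < 1 := by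
    rw [ENNReal.ofReal_lt_one, ← div_eq_mul_inv, div_lt_one (by linarith)]
    exact hq
  by_contra hA₀
  refine hle.not_gt ?_
  simpa using ENNReal.mul_lt_mul_left hA₀ hA hlt

theorem strictMonoOn_integral_of_volume_zeros_eq_zero {a b : ℝ} {G : ℝ → ℝ} (hG : Continuous G)
    (hG₀ : ∀ x, 0 ≤ G x) (h : volume {x ∈ Icc a b | G x = 0} = 0) (c : ℝ) :
    StrictMonoOn (fun x ↦ ∫ t in c..x, G t) (Icc a b) := by
  intro x hx y hy hxy
  have integral_pos : 0 < ∫ t in x..y, G t := by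
    refine intervalIntegral.integral_pos hxy hG.continuousOn (fun t _ ↦ hG₀ t) ?_
    by_contra! hzero
    have : Icc x y ⊆ {x ∈ Icc a b | G x = 0} := fun t ht ↦
      ⟨⟨hx.1.trans ht.1, ht.2.trans hy.2⟩, (hzero t ht).antisymm (hG₀ t)⟩
    have hvol := measure_mono_null this h
    rw [Real.volume_Icc, ENNReal.ofReal_eq_zero] at hvol
    linarith
  rw [← sub_pos, intervalIntegral.integral_interval_sub_left (hG.intervalIntegrable _ _)
    (hG.intervalIntegrable _ _)]
  exact integral_pos

theorem integral_eq_integral_div_of_eq_comp_mul_sub {k q s a b : ℝ} {G H : ℝ → ℝ} (hq : q ≠ 0)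
    (h : ∀ t ∈ uIcc a b, G t = q / k * H (q * t - s)) :
    ∫ t in a..b, G t = (∫ t in (q * a - s)..(q * b - s), H t) / k := by
  rw [intervalIntegral.integral_congr h, intervalIntegral.integral_const_mul,
    intervalIntegral.integral_comp_mul_sub H hq, smul_eq_mul]
  field_simp

end RealLine

section Holder

open Set Filter Topology
open scoped NNReal

variable {α β : Type*} {C r : ℝ≥0}

theorem holderWith_of_dist_le [PseudoMetricSpace α] [PseudoMetricSpace β] {f : α → β}
    (h : ∀ x y, dist (f x) (f y) ≤ C * dist x y ^ (r : ℝ)) : HolderWith C r f := by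
  intro x y
  have := h x y
  simp only [dist_nndist, edist_nndist] at this ⊢
  rw [← ENNReal.coe_rpow_of_nonneg _ r.coe_nonneg]
  exact_mod_cast this

theorem holderWith_max [PseudoEMetricSpace α] {f g : α → ℝ} (hf : HolderWith C r f)
    (hg : HolderWith C r g) : HolderWith C r fun x ↦ max (f x) (g x) := fun x y ↦
  calc edist (max (f x) (g x)) (max (f y) (g y))
      ≤ edist (f x, g x) (f y, g y) := by
        simpa using lipschitzWith_max.edist_le_mul (f x, g x) (f y, g y)
    _ ≤ C * edist x y ^ (r : ℝ) := max_le (hf x y) (hg x y)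

/-- `G` is a Hölder bump on `(a, b)`: a nonnegative function that vanishes outside the open
interval `(a, b)` and is `r`-Hölder with constant `C` on the whole line. -/
structure IsHolderBump (C r : ℝ≥0) (a b : ℝ) (G : ℝ → ℝ) : Prop where
  nonneg : ∀ x, 0 ≤ G x
  eq_zero : ∀ x, x ∉ Ioo a b → G x = 0
  holder : HolderWith C r G

namespace IsHolderBump

variable {a b c : ℝ} {G H : ℝ → ℝ}

theorem eq_zero_of_le (hG : IsHolderBump C r a b G) {x : ℝ} (hx : x ≤ a) : G x = 0 :=
  hG.eq_zero x fun h ↦ hx.not_gt h.1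

theorem eq_zero_of_ge (hG : IsHolderBump C r a b G) {x : ℝ} (hx : b ≤ x) : G x = 0 :=
  hG.eq_zero x fun h ↦ hx.not_gt h.2

theorem zero : IsHolderBump C r a b 0 := ⟨fun _ ↦ le_rfl, fun _ _ ↦ rfl, .zero⟩

theorem le_dist_left_rpow (hG : IsHolderBump C r a b G) (x : ℝ) :
    G x ≤ C * dist x a ^ (r : ℝ) := by
  simpa [hG.eq_zero_of_le le_rfl, abs_of_nonneg (hG.nonneg x)] using hG.holder.dist_le x a

theorem comp_sub (hG : IsHolderBump C r a b G) (s : ℝ) :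
    IsHolderBump C r (a + s) (b + s) fun x ↦ G (x - s) where
  nonneg x := hG.nonneg _
  eq_zero x hx := hG.eq_zero _ fun h ↦ hx ⟨by linarith [h.1], by linarith [h.2]⟩
  holder x y := by simpa using hG.holder (x - s) (y - s)

theorem mul_comp_mul (hG : IsHolderBump C r a b G) {k q : ℝ} (hk : 0 ≤ k) (hq : 0 < q)
    (hkq : k * q ^ (r : ℝ) ≤ 1) : IsHolderBump C r (a / q) (b / q) fun x ↦ k * G (q * x) where
  nonneg x := mul_nonneg hk (hG.nonneg _)
  eq_zero x hx := by
    rw [hG.eq_zero _ fun h ↦ hx ⟨(div_lt_iff₀' hq).2 h.1, (lt_div_iff₀' hq).2 h.2⟩, mul_zero]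
  holder := holderWith_of_dist_le fun x y ↦
    calc dist (k * G (q * x)) (k * G (q * y))
        = k * dist (G (q * x)) (G (q * y)) := by
          rw [Real.dist_eq, Real.dist_eq, ← mul_sub, abs_mul, abs_of_nonneg hk]
      _ ≤ k * (C * dist (q * x) (q * y) ^ (r : ℝ)) := by
          gcongr
          exact hG.holder.dist_le _ _
      _ = k * q ^ (r : ℝ) * (C * dist x y ^ (r : ℝ)) := by
          rw [Real.dist_eq, ← mul_sub, abs_mul, abs_of_pos hq,
            Real.mul_rpow hq.le (abs_nonneg _), Real.dist_eq]
          ring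
      _ ≤ C * dist x y ^ (r : ℝ) := mul_le_of_le_one_left (by positivity) hkq

-- The constant is not doubled, since the sum of two bumps on disjoint intervals is their maximum.
theorem add (hG : IsHolderBump C r a b G) (hH : IsHolderBump C r b c H) (hab : a ≤ b)
    (hbc : b ≤ c) : IsHolderBump C r a c fun x ↦ G x + H x where
  nonneg x := add_nonneg (hG.nonneg x) (hH.nonneg x)
  eq_zero x hx := by
    rw [hG.eq_zero x fun h ↦ hx ⟨h.1, h.2.trans_le hbc⟩,
      hH.eq_zero x fun h ↦ hx ⟨hab.trans_lt h.1, h.2⟩, add_zero]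
  holder := by
    have add_eq_max (x : ℝ) : G x + H x = max (G x) (H x) := by
      rcases le_total x b with hx | hx
      · rw [hH.eq_zero_of_le hx, add_zero, max_eq_left (hG.nonneg x)]
      · rw [hG.eq_zero_of_ge hx, zero_add, max_eq_right (hH.nonneg x)]
    simp only [add_eq_max]
    exact holderWith_max hG.holder hH.holder

theorem of_tendsto {ι : Type*} {l : Filter ι} [l.NeBot] {F : ι → ℝ → ℝ}
    (hF : ∀ i, IsHolderBump C r a b (F i)) (hG : ∀ x, Tendsto (F · x) l (𝓝 (G x))) :
    IsHolderBump C r a b G where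
  nonneg x := ge_of_tendsto' (hG x) fun i ↦ (hF i).nonneg x
  eq_zero x hx := tendsto_nhds_unique (hG x) <|
    tendsto_const_nhds.congr fun i ↦ ((hF i).eq_zero x hx).symm
  holder x y := le_of_tendsto' ((hG x).edist (hG y)) fun i ↦ (hF i).holder x y

end IsHolderBump

end Holder

section ParabolicBump

open Set
open scoped NNReal

/-- The profile `6 x (1 - x)` of the derivative on a gap; the factor `6` makes its integral `1`.
`IccExtend` prolongs it by its endpoint values, which are `0`. -/
noncomputable def parabolicBump : ℝ → ℝ :=
  IccExtend zero_le_one fun t : Icc (0 : ℝ) 1 ↦ 6 * (t : ℝ) * (1 - t)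

theorem parabolicBump_of_mem {x : ℝ} (hx : x ∈ Icc (0 : ℝ) 1) :
    parabolicBump x = 6 * x * (1 - x) := IccExtend_of_mem _ _ hx

theorem parabolicBump_pos {x : ℝ} (hx : x ∈ Ioo (0 : ℝ) 1) : 0 < parabolicBump x := by
  rw [parabolicBump_of_mem (Ioo_subset_Icc_self hx)]
  have := mul_pos hx.1 (sub_pos.2 hx.2)
  linarith

theorem integral_parabolicBump : ∫ t in (0 : ℝ)..1, parabolicBump t = 1 := by
  have expand : ∀ x ∈ uIcc (0 : ℝ) 1, parabolicBump x = 6 * x - 6 * x ^ 2 := fun x hx ↦ by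
    rw [parabolicBump_of_mem (uIcc_of_le (zero_le_one' ℝ) ▸ hx)]
    ring
  rw [intervalIntegral.integral_congr expand, intervalIntegral.integral_sub
    (Continuous.intervalIntegrable (by fun_prop) _ _)
    (Continuous.intervalIntegrable (by fun_prop) _ _), intervalIntegral.integral_const_mul,
    intervalIntegral.integral_const_mul, integral_id, integral_pow]
  norm_num

theorem six_mul_mul_one_sub_le_rpow_two_thirds {d : ℝ} (hd : 0 ≤ d) :
    6 * d * (1 - d) ≤ 4 * d ^ (2 / 3 : ℝ) := by
  obtain ⟨t, ht, rfl⟩ : ∃ t : ℝ, 0 ≤ t ∧ t ^ 3 = d :=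
    ⟨d ^ (1 / 3 : ℝ), by positivity, by rw [← Real.rpow_mul_natCast hd]; norm_num⟩
  have rpow_eq : (t ^ 3) ^ (2 / 3 : ℝ) = t ^ 2 := by
    rw [← Real.rpow_natCast_mul ht]
    norm_num
  have quartic : 6 * t * (1 - t ^ 3) ≤ 4 := by
    nlinarith [sq_nonneg (t ^ 2 - 1 / 2), sq_nonneg (t - 1 / 2)]
  rw [rpow_eq]
  nlinarith [mul_le_mul_of_nonneg_left quartic (sq_nonneg t)]

theorem holderWith_parabola_Icc :
    HolderWith 4 (2 / 3) fun t : Icc (0 : ℝ) 1 ↦ 6 * (t : ℝ) * (1 - t) := by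
  refine holderWith_of_dist_le fun ⟨x, hx₀, hx₁⟩ ⟨y, hy₀, hy₁⟩ ↦ ?_
  have abs_one_sub_le : |1 - x - y| ≤ 1 - |x - y| := by
    rcases abs_cases (x - y) with h | h <;> rcases abs_cases (1 - x - y) with h' | h' <;> linarith
  calc |6 * x * (1 - x) - 6 * y * (1 - y)|
      = |6 * ((x - y) * (1 - x - y))| := by ring_nf
    _ = 6 * |x - y| * |1 - x - y| := by rw [abs_mul, abs_mul]; norm_num; ring
    _ ≤ 6 * |x - y| * (1 - |x - y|) := by gcongr
    _ ≤ 4 * |x - y| ^ (2 / 3 : ℝ) := six_mul_mul_one_sub_le_rpow_two_thirds (abs_nonneg _)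
    _ = _ := by simp [Subtype.dist_eq, Real.dist_eq]

theorem isHolderBump_parabolicBump {r : ℝ≥0} (hr : r ≤ 2 / 3) :
    IsHolderBump 4 r 0 1 parabolicBump where
  nonneg x := mul_nonneg (mul_nonneg (by norm_num) (projIcc 0 1 zero_le_one x).2.1)
    (sub_nonneg.2 (projIcc 0 1 zero_le_one x).2.2)
  eq_zero x hx := by
    rcases le_or_gt x 0 with h | h
    · simp [parabolicBump, IccExtend_of_le_left _ _ h]
    · simp [parabolicBump, IccExtend_of_right_le _ _ (not_lt.1 fun h' ↦ hx ⟨h, h'⟩)]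
  holder := by
    have edist_le_one (x y : Icc (0 : ℝ) 1) : edist x y ≤ (1 : ℝ≥0) := by
      rw [edist_le_coe, ← NNReal.coe_le_coe, coe_nndist]
      exact Real.dist_le_of_mem_Icc_01 x.2 y.2
    simpa [parabolicBump, IccExtend] using (holderWith_parabola_Icc.of_le edist_le_one hr).comp
      (LipschitzWith.projIcc (zero_le_one' ℝ)).holderWith

end ParabolicBump

section SelfSimilarDensity

open Set Filter Topology
open scoped NNReal

variable {C r : ℝ≥0} {q M : ℝ} {g G : ℝ → ℝ}

/-- One step of the construction of the derivative: shrink by `q` and multiply by `q / 3` the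
juxtaposition of `G` on `[0, M]`, `g` on `[M, M + 1]` and another copy of `G` on
`[M + 1, 2 * M + 1]`. The factor `q / 3` makes each of the three integrals a third of the original
one. -/
noncomputable def selfSimilarStep (q M : ℝ) (g G : ℝ → ℝ) (x : ℝ) : ℝ :=
  q / 3 * (G (q * x) + g (q * x - M) + G (q * x - (M + 1)))

theorem selfSimilarStep_mono (hq : 0 ≤ q) : Monotone (selfSimilarStep q M g) := fun G H h x ↦ by
  unfold selfSimilarStep
  gcongr <;> exact h _

theorem isHolderBump_selfSimilarStep (hg : IsHolderBump C r 0 1 g) (hG : IsHolderBump C r 0 M G)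
    (hq : 0 < q) (hqr : q ^ (1 + r : ℝ) ≤ 3) (hM₀ : 0 ≤ M) (hM : q * M = 2 * M + 1) :
    IsHolderBump C r 0 M (selfSimilarStep q M g G) := by
  have hg' : IsHolderBump C r M (M + 1) fun x ↦ g (x - M) := by
    simpa [add_comm] using hg.comp_sub M
  have hG' : IsHolderBump C r (M + 1) (q * M) fun x ↦ G (x - (M + 1)) := by
    convert hG.comp_sub (M + 1) using 1
    · ring
    · linarith
  have hqr' : q / 3 * q ^ (r : ℝ) ≤ 1 := by
    rw [Real.rpow_add hq, Real.rpow_one] at hqr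
    linarith
  have := ((hG.add hg' hM₀ (by linarith)).add hG' (by linarith) (by linarith)).mul_comp_mul
    (by positivity) hq hqr'
  rwa [zero_div, mul_div_cancel_left₀ _ hq.ne'] at this

theorem exists_isHolderBump_isFixedPt_selfSimilarStep (hg : IsHolderBump C r 0 1 g)
    (hq : 0 < q) (hqr : q ^ (1 + r : ℝ) ≤ 3) (hM₀ : 0 ≤ M) (hM : q * M = 2 * M + 1) :
    ∃ G, IsHolderBump C r 0 M G ∧ Function.IsFixedPt (selfSimilarStep q M g) G := by
  set T := selfSimilarStep q M g
  have bump (n : ℕ) : IsHolderBump C r 0 M (T^[n] 0) := by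
    induction n with
    | zero => exact .zero
    | succ n ih =>
      rw [Function.iterate_succ_apply']
      exact isHolderBump_selfSimilarStep hg ih hq hqr hM₀ hM
  have mono : Monotone fun n ↦ T^[n] 0 :=
    (selfSimilarStep_mono hq.le).monotone_iterate_of_le_map (bump 1).nonneg
  have tendsto (x : ℝ) : Tendsto (fun n ↦ T^[n] 0 x) atTop (𝓝 (⨆ n, T^[n] 0 x)) :=
    tendsto_atTop_ciSup (fun m n h ↦ mono h x)
      ⟨_, forall_mem_range.2 fun n ↦ (bump n).le_dist_left_rpow x⟩
  refine ⟨fun x ↦ ⨆ n, T^[n] 0 x, .of_tendsto bump tendsto, funext fun x ↦ ?_⟩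
  refine tendsto_nhds_unique ?_ ((tendsto_add_atTop_iff_nat 1).2 (tendsto x))
  simp only [Function.iterate_succ_apply']
  exact (((tendsto _).add tendsto_const_nhds).add (tendsto _)).const_mul _

/-- The three pieces of a function `G` fixed by `selfSimilarStep q M g`: on the two outer pieces
`G` is a rescaled copy of itself, and on the middle piece it is a rescaled copy of `g`. -/
structure IsSelfSimilarDensity (q M : ℝ) (g G : ℝ → ℝ) : Prop where
  left : ∀ x, q * x ≤ M → G x = q / 3 * G (q * x)
  middle : ∀ x, M ≤ q * x → q * x ≤ M + 1 → G x = q / 3 * g (q * x - M)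
  right : ∀ x, M + 1 ≤ q * x → G x = q / 3 * G (q * x - (M + 1))

theorem isSelfSimilarDensity_of_isFixedPt (hg : IsHolderBump C r 0 1 g)
    (hG : IsHolderBump C r 0 M G) (h : Function.IsFixedPt (selfSimilarStep q M g) G) :
    IsSelfSimilarDensity q M g G := by
  refine ⟨fun x hx ↦ ?_, fun x hx hx' ↦ ?_, fun x hx ↦ ?_⟩ <;>
    conv_lhs => rw [← h.eq, selfSimilarStep]
  · rw [hg.eq_zero_of_le (by linarith), hG.eq_zero_of_le (x := _ - (M + 1)) (by linarith),
      add_zero, add_zero]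
  · rw [hG.eq_zero_of_ge hx, hG.eq_zero_of_le (by linarith), zero_add, add_zero]
  · rw [hG.eq_zero_of_ge (by linarith), hg.eq_zero_of_ge (by linarith), zero_add, zero_add]

/-- The critical set in `[0, M]` of a function with derivative `G`. -/
def criticalSet (M : ℝ) (G : ℝ → ℝ) : Set ℝ := {x ∈ Icc 0 M | G x = 0}

theorem isCompact_criticalSet (hG : Continuous G) : IsCompact (criticalSet M G) :=
  isCompact_Icc.inter_right (isClosed_eq hG continuous_const)

namespace IsSelfSimilarDensity

theorem criticalSet_eq_union (h : IsSelfSimilarDensity q M g G) (hg : ∀ x ∈ Ioo 0 1, 0 < g x)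
    (hq : 0 < q) (hM₀ : 0 ≤ M) (hM : q * M = 2 * M + 1) :
    criticalSet M G =
      (· / q) '' criticalSet M G ∪ (fun a ↦ (M + 1 + a) / q) '' criticalSet M G := by
  apply Subset.antisymm
  · rintro x ⟨⟨hx₀, hxM⟩, hx⟩
    have hqx : q * x ≤ 2 * M + 1 := hM ▸ mul_le_mul_of_nonneg_left hxM hq.le
    rcases le_or_gt (q * x) M with hl | hl
    · rw [h.left x hl] at hx
      exact .inl ⟨q * x, ⟨⟨by positivity, hl⟩, by simpa [hq.ne'] using hx⟩, by field_simp⟩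
    rcases lt_or_ge (q * x) (M + 1) with hr | hr
    · have := hg (q * x - M) ⟨by linarith, by linarith⟩
      rw [h.middle x hl.le hr.le] at hx
      exact absurd hx (by positivity)
    · rw [h.right x hr] at hx
      exact .inr ⟨q * x - (M + 1), ⟨⟨by linarith, by linarith⟩, by simpa [hq.ne'] using hx⟩,
        by field_simp; ring⟩
  · rintro _ (⟨a, ⟨⟨ha₀, haM⟩, ha⟩, rfl⟩ | ⟨a, ⟨⟨ha₀, haM⟩, ha⟩, rfl⟩)
    · refine ⟨⟨by positivity, (div_le_iff₀' hq).2 (by linarith)⟩, ?_⟩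
      rw [h.left _ (by rwa [mul_div_cancel₀ _ hq.ne']), mul_div_cancel₀ _ hq.ne', ha, mul_zero]
    · refine ⟨⟨by positivity, (div_le_iff₀' hq).2 (by linarith)⟩, ?_⟩
      rw [h.right _ (by rw [mul_div_cancel₀ _ hq.ne']; linarith), mul_div_cancel₀ _ hq.ne',
        add_sub_cancel_left, ha, mul_zero]

theorem integral_div (h : IsSelfSimilarDensity q M g G) (hq : 0 < q) {a : ℝ} (ha : a ∈ Icc 0 M) :
    ∫ t in 0..a / q, G t = (∫ t in 0..a, G t) / 3 := by
  rw [integral_eq_integral_div_of_eq_comp_mul_sub (H := G) (k := 3) (s := 0) hq.ne', mul_zero,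
    sub_zero, sub_zero, mul_div_cancel₀ _ hq.ne']
  intro t ht
  rw [uIcc_of_le (div_nonneg ha.1 hq.le), mem_Icc, le_div_iff₀' hq] at ht
  rw [sub_zero, h.left t (ht.2.trans ha.2)]

theorem integral_add_div_eq_integral_add (h : IsSelfSimilarDensity q M g G) (hG : Continuous G)
    (hg : ∫ t in 0..1, g t = 1) (hq : 0 < q) (hM₀ : 0 ≤ M) {a : ℝ} (ha : 0 ≤ a) :
    ∫ t in 0..(M + 1 + a) / q, G t = ((∫ t in 0..M, G t) + 1 + ∫ t in 0..a, G t) / 3 := by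
  have middle : ∫ t in M / q..(M + 1) / q, G t = 1 / 3 := by
    rw [integral_eq_integral_div_of_eq_comp_mul_sub (H := g) (k := 3) (s := M) hq.ne',
      mul_div_cancel₀ _ hq.ne', mul_div_cancel₀ _ hq.ne', sub_self, add_sub_cancel_left, hg]
    intro t ht
    rw [uIcc_of_le (by gcongr; linarith), mem_Icc, div_le_iff₀' hq, le_div_iff₀' hq] at ht
    exact h.middle t ht.1 ht.2
  have right : ∫ t in (M + 1) / q..(M + 1 + a) / q, G t = (∫ t in 0..a, G t) / 3 := by
    rw [integral_eq_integral_div_of_eq_comp_mul_sub (H := G) (k := 3) (s := M + 1) hq.ne',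
      mul_div_cancel₀ _ hq.ne', mul_div_cancel₀ _ hq.ne', sub_self, add_sub_cancel_left]
    intro t ht
    rw [uIcc_of_le (div_le_div_of_nonneg_right (by linarith) hq.le), mem_Icc,
      div_le_iff₀' hq] at ht
    exact h.right t ht.1
  have hint (a b : ℝ) : IntervalIntegrable G volume a b := hG.intervalIntegrable a b
  rw [← intervalIntegral.integral_add_adjacent_intervals (hint 0 ((M + 1) / q)) (hint _ _), right,
    ← intervalIntegral.integral_add_adjacent_intervals (hint 0 (M / q)) (hint _ _), middle,
    h.integral_div hq (right_mem_Icc.2 hM₀)]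
  ring

theorem integral_eq_one (h : IsSelfSimilarDensity q M g G) (hG : Continuous G)
    (hg : ∫ t in 0..1, g t = 1) (hq : 0 < q) (hM₀ : 0 ≤ M) (hM : q * M = 2 * M + 1) :
    ∫ t in 0..M, G t = 1 := by
  have := h.integral_add_div_eq_integral_add hG hg hq hM₀ hM₀
  rw [show M + 1 + M = q * M by linarith, mul_div_cancel_left₀ _ hq.ne'] at this
  linarith

theorem integral_add_div (h : IsSelfSimilarDensity q M g G) (hG : Continuous G)
    (hg : ∫ t in 0..1, g t = 1) (hq : 0 < q) (hM₀ : 0 ≤ M) (hM : q * M = 2 * M + 1) {a : ℝ}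
    (ha : 0 ≤ a) : ∫ t in 0..(M + 1 + a) / q, G t = (2 + ∫ t in 0..a, G t) / 3 := by
  rw [h.integral_add_div_eq_integral_add hG hg hq hM₀ ha, h.integral_eq_one hG hg hq hM₀ hM]
  ring

theorem image_criticalSet_eq_cantorSet (h : IsSelfSimilarDensity q M g G) (hG : Continuous G)
    (hG₀ : (criticalSet M G).Nonempty) (hg : ∀ x ∈ Ioo 0 1, 0 < g x)
    (hg₁ : ∫ t in 0..1, g t = 1) (hq : 0 < q) (hM₀ : 0 ≤ M) (hM : q * M = 2 * M + 1) :
    (fun x ↦ ∫ t in 0..x, G t) '' criticalSet M G = cantorSet := by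
  have hcont : Continuous fun x ↦ ∫ t in 0..x, G t :=
    intervalIntegral.continuous_primitive (fun a b ↦ hG.intervalIntegrable a b) 0
  refine eq_cantorSet_of_eq_union_halves ((isCompact_criticalSet hG).image hcont) (hG₀.image _) ?_
  conv_lhs => rw [h.criticalSet_eq_union hg hq hM₀ hM]
  simp only [image_union, image_image]
  congr 1
  · exact image_congr fun a ha ↦ h.integral_div hq ha.1
  · exact image_congr fun a ha ↦ h.integral_add_div hG hg₁ hq hM₀ hM ha.1.1

end IsSelfSimilarDensity

end SelfSimilarDensity

theorem lt_two_thirds_of_rpow_one_add_le_three {q r : ℝ} (hq : 2 ≤ q)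
    (hqr : q ^ (1 + r) ≤ 3) : r < 2 / 3 := by
  have three_lt : (3 : ℝ) < 2 ^ (5 / 3 : ℝ) := by
    have cube : ((2 : ℝ) ^ (5 / 3 : ℝ)) ^ 3 = 32 := by
      rw [← Real.rpow_mul_natCast (by norm_num)]
      norm_num
    exact lt_of_pow_lt_pow_left₀ 3 (by positivity) (by rw [cube]; norm_num)
  by_contra! hr
  have : (2 : ℝ) ^ (5 / 3 : ℝ) ≤ q ^ (1 + r) := calc
    (2 : ℝ) ^ (5 / 3 : ℝ) ≤ 2 ^ (1 + r) :=
      Real.rpow_le_rpow_of_exponent_le (by norm_num) (by linarith)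
    _ ≤ q ^ (1 + r) := by gcongr
  linarith

theorem two_lt_three_rpow_two_thirds : (2 : ℝ) < 3 ^ ((2 : ℝ) / 3) := by
  have cube : ((3 : ℝ) ^ ((2 : ℝ) / 3)) ^ 3 = 9 := by
    rw [← Real.rpow_mul_natCast (by norm_num)]
    norm_num
  exact lt_of_pow_lt_pow_left₀ 3 (by positivity) (by rw [cube]; norm_num)

theorem exists_C1_half_holder_deriv_image_cantorSet_general {q r : ℝ} (hq : 2 < q) (hr : 0 < r)
    (hqr : q ^ (1 + r) ≤ 3) :
    ∃ (M : ℝ), M = 1 / (q - 2) ∧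
    ∃ f f' : ℝ → ℝ,
      StrictMonoOn f (Set.Icc 0 M) ∧
      Set.MapsTo f (Set.Icc 0 M) (Set.Icc 0 1) ∧
      (∀ x ∈ Set.Icc 0 M, HasDerivWithinAt f (f' x) (Set.Icc 0 M) x) ∧
      ContinuousOn f' (Set.Icc 0 M) ∧
      (∀ x ∈ Set.Icc 0 M, ∀ y ∈ Set.Icc 0 M,
        |f' x - f' y| ≤ 4 * |x - y| ^ r) ∧
      f 0 = 0 ∧ f M = 1 ∧
      volume {x ∈ Set.Icc 0 M | f' x = 0} = 0 ∧
      f '' {x ∈ Set.Icc 0 M | f' x = 0} = cantorSet := by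
  lift r to NNReal using hr.le
  have hq₀ : 0 < q := by linarith
  refine ⟨1 / (q - 2), rfl, ?_⟩
  set M := 1 / (q - 2) with hM_def
  have hM₀ : 0 < M := one_div_pos.2 (by linarith)
  have hM : q * M = 2 * M + 1 := by
    have : q - 2 ≠ 0 := by linarith
    rw [hM_def]; field_simp; ring
  have hg : IsHolderBump 4 r 0 1 parabolicBump := isHolderBump_parabolicBump <| by
    exact_mod_cast (lt_two_thirds_of_rpow_one_add_le_three hq.le hqr).le
  obtain ⟨G, hG, hfix⟩ := exists_isHolderBump_isFixedPt_selfSimilarStep hg hq₀ hqr hM₀.le hM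
  have hGc : Continuous G := hG.holder.continuous (by exact_mod_cast hr)
  have hself := isSelfSimilarDensity_of_isFixedPt hg hG hfix
  have hA : volume (criticalSet M G) = 0 := volume_eq_zero_of_subset_union_image_div hq
    (isCompact_criticalSet hGc).measure_ne_top
    (hself.criticalSet_eq_union (fun _ ↦ parabolicBump_pos) hq₀ hM₀.le hM).subset
  have hmono := strictMonoOn_integral_of_volume_zeros_eq_zero hGc hG.nonneg hA 0
  have h₀ : ∫ t in 0..0, G t = 0 := intervalIntegral.integral_same
  have h₁ := hself.integral_eq_one hGc integral_parabolicBump hq₀ hM₀.le hM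
  refine ⟨fun x ↦ ∫ t in 0..x, G t, G, hmono, ?_, fun x _ ↦ ?_, hGc.continuousOn,
    fun x _ y _ ↦ hG.holder.dist_le x y, h₀, h₁, hA, ?_⟩
  · simpa only [h₀, h₁] using hmono.monotoneOn.mapsTo_Icc
  · exact (hGc.integral_hasStrictDerivAt 0 x).hasDerivAt.hasDerivWithinAt
  · exact hself.image_criticalSet_eq_cantorSet hGc ⟨0, ⟨le_rfl, hM₀.le⟩, hG.eq_zero_of_le le_rfl⟩
      (fun _ ↦ parabolicBump_pos) integral_parabolicBump hq₀ hM₀.le hM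

/-- With `M = 1 / (3^{2/3} - 2)`, there is a strictly increasing `C¹` function
`f : [0, M] → [0, 1]` whose derivative is `1/2`-Hölder with constant `4`,
with `f 0 = 0`, `f M = 1`, whose critical set `A = {x ∈ [0, M] : f' x = 0}` is
Lebesgue-null and satisfies `f(A) = C`, the Cantor ternary set. -/
theorem exists_C1_half_holder_deriv_image_cantorSet :
    ∃ (M : ℝ), M = 1 / ((3 : ℝ) ^ ((2 : ℝ) / 3) - 2) ∧
    ∃ f f' : ℝ → ℝ,
      StrictMonoOn f (Set.Icc 0 M) ∧
      Set.MapsTo f (Set.Icc 0 M) (Set.Icc 0 1) ∧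
      (∀ x ∈ Set.Icc 0 M, HasDerivWithinAt f (f' x) (Set.Icc 0 M) x) ∧
      ContinuousOn f' (Set.Icc 0 M) ∧
      (∀ x ∈ Set.Icc 0 M, ∀ y ∈ Set.Icc 0 M,
        |f' x - f' y| ≤ 4 * |x - y| ^ ((1 : ℝ) / 2)) ∧
      f 0 = 0 ∧ f M = 1 ∧
      volume {x ∈ Set.Icc 0 M | f' x = 0} = 0 ∧
      f '' {x ∈ Set.Icc 0 M | f' x = 0} = cantorSet :=
  exists_C1_half_holder_deriv_image_cantorSet_general two_lt_three_rpow_two_thirds one_half_pos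
    (by rw [← Real.rpow_mul] <;> norm_num)
end

section
/- Let M = 1 / (3^{2/3} − 2). There exists a function F : ℝ² → ℝ, continuously differentiable on [0, M]², whose gradient ∇F is 1/2-Hölder continuous on [0, M]², such that every u ∈ [0, 2] is a critical value of F: for every u ∈ [0, 2] there exists (x, y) ∈ [0, M]² with ∇F(x, y) = (0, 0) and F(x, y) = u. -/
/-!
The gradient can be `r`-Hölder for any `r < 1`, and the critical values can fill any interval.
Choose `N` with `(2N)^(1+r) < N²` and let `h` be a smooth `1`-periodic function equal to a
constant `v k` on each plateau `[k/N, (k+1/2)/N]`, `k < N`. The sum `f x = ∑ N^(-2n) h((2N)^n x)`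
is then `C¹` with `r`-Hölder derivative. If all base-`2N` digits of `x` are even, every `(2N)^n x`
lies on a plateau of `h` modulo `1`, so that `f' x = 0`, while `f x = ∑ N^(-2n) v (d n)`, where
`2 d n` are the digits of `x`. Taking heights proportional to `N k` for `f` and to `k` for a
second such function `g`, the critical values of `f x + g y` include all base-`N²` expansions with
digits `N d n + e n`, hence a full interval.
-/

open Set Filter Function
open scoped NNReal

section Holder

theorem holderWith_tsum {ι X E : Type*} [PseudoMetricSpace X] [SeminormedAddCommGroup E] [T2Space E]
    {g : ι → X → E} {C : ι → ℝ≥0} {r : ℝ≥0} (hC : Summable C)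
    (hg : ∀ i, HolderWith (C i) r (g i)) (hs : ∀ x, Summable (g · x)) :
    HolderWith (∑' i, C i) r (fun x => ∑' i, g i x) := by
  intro x y
  have hnn : ‖∑' i, (g i x - g i y)‖₊ ≤ (∑' i, C i) * nndist x y ^ (r : ℝ) :=
    tsum_of_nnnorm_bounded (hC.hasSum.mul_right _) fun i => by
      simpa only [nndist_eq_nnnorm] using (hg i).nndist_le x y
  rw [(hs x).tsum_sub (hs y), ← nndist_eq_nnnorm] at hnn
  rw [edist_nndist, edist_nndist, ← ENNReal.coe_rpow_of_nonneg _ r.coe_nonneg]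
  exact_mod_cast hnn

theorem holderWith_fderiv_iff_deriv {𝕜 E : Type*} [NontriviallyNormedField 𝕜]
    [NormedAddCommGroup E] [NormedSpace 𝕜 E] {f : 𝕜 → E} {C r : ℝ≥0} :
    HolderWith C r (fderiv 𝕜 f) ↔ HolderWith C r (deriv f) := by
  have hiso (v w : E) : edist (ContinuousLinearMap.toSpanSingleton 𝕜 v)
      (ContinuousLinearMap.toSpanSingleton 𝕜 w) = edist v w :=
    (ContinuousLinearMap.toSpanSingletonLIE 𝕜 E).isometry.edist_eq v w
  simp only [HolderWith, ← toSpanSingleton_deriv, hiso]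

theorem fderiv_fst_add_snd {𝕜 E F G : Type*} [NontriviallyNormedField 𝕜]
    [NormedAddCommGroup E] [NormedSpace 𝕜 E] [NormedAddCommGroup F] [NormedSpace 𝕜 F]
    [NormedAddCommGroup G] [NormedSpace 𝕜 G] {f : E → G} {g : F → G}
    (hf : Differentiable 𝕜 f) (hg : Differentiable 𝕜 g) (p : E × F) :
    fderiv 𝕜 (fun p : E × F => f p.1 + g p.2) p =
      (fderiv 𝕜 f p.1).comp (.fst 𝕜 E F) + (fderiv 𝕜 g p.2).comp (.snd 𝕜 E F) :=
  (((hf p.1).hasFDerivAt.comp p hasFDerivAt_fst).add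
    ((hg p.2).hasFDerivAt.comp p hasFDerivAt_snd)).fderiv

theorem exists_holderWith_fderiv_fst_add_snd {𝕜 E F G : Type*} [NontriviallyNormedField 𝕜]
    [NormedAddCommGroup E] [NormedSpace 𝕜 E] [NormedAddCommGroup F] [NormedSpace 𝕜 F]
    [NormedAddCommGroup G] [NormedSpace 𝕜 G] {f : E → G} {g : F → G} {C D r : ℝ≥0}
    (hf : Differentiable 𝕜 f) (hg : Differentiable 𝕜 g)
    (hf' : HolderWith C r (fderiv 𝕜 f)) (hg' : HolderWith D r (fderiv 𝕜 g)) :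
    ∃ K, HolderWith K r (fderiv 𝕜 fun p : E × F => f p.1 + g p.2) := by
  have hfst := (ContinuousLinearMap.precomp G (.fst 𝕜 E F)).lipschitz.holderWith.comp
    (hf'.comp (LipschitzWith.prod_fst (β := F)).holderWith)
  have hsnd := (ContinuousLinearMap.precomp G (.snd 𝕜 E F)).lipschitz.holderWith.comp
    (hg'.comp (LipschitzWith.prod_snd (α := E)).holderWith)
  rw [one_mul, mul_one] at hfst hsnd
  rw [funext (fderiv_fst_add_snd hf hg)]
  exact ⟨_, hfst.add hsnd⟩

end Holder

theorem periodic_deriv {E : Type*} [NormedAddCommGroup E] [NormedSpace ℝ E] {f : ℝ → E} {c : ℝ}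
    (hf : Periodic f c) : Periodic (deriv f) c := by
  intro x
  rw [← deriv_comp_add_const, funext hf]

theorem exists_forall_norm_le_of_periodic {E : Type*} [SeminormedAddCommGroup E] {f : ℝ → E}
    {c : ℝ} (hc : c ≠ 0) (hp : Periodic f c) (hf : Continuous f) : ∃ C, ∀ x, ‖f x‖ ≤ C := by
  simpa only [forall_mem_range] using (hp.isBounded_of_continuous hc hf).exists_norm_le

theorem exists_holderWith_of_periodic {E : Type*} [NormedAddCommGroup E] [NormedSpace ℝ E]
    {f : ℝ → E} {c : ℝ} (hc : c ≠ 0) (hp : Periodic f c) (hf : ContDiff ℝ 1 f) {r : ℝ≥0}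
    (hr : r ≤ 1) : ∃ C, HolderWith C r f := by
  obtain ⟨B, hB⟩ := exists_forall_norm_le_of_periodic hc hp hf.continuous
  obtain ⟨L, hL⟩ := exists_forall_norm_le_of_periodic hc (periodic_deriv hp)
    (hf.continuous_deriv le_rfl)
  have hlip : LipschitzWith L.toNNReal f :=
    lipschitzWith_of_nnnorm_deriv_le (hf.differentiable one_ne_zero) fun x =>
      NNReal.le_toNNReal_of_coe_le (hL x)
  have hbdd : HolderWith (B + B).toNNReal 0 f := fun x y => by
    rw [NNReal.coe_zero, ENNReal.rpow_zero, mul_one, edist_le_coe]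
    exact NNReal.le_toNNReal_of_coe_le
      ((dist_le_norm_add_norm _ _).trans (add_le_add (hB x) (hB y)))
  exact ⟨_, hbdd.of_le_of_le hlip.holderWith zero_le hr⟩

/-- The Weierstrass-type series `x ↦ ∑ aⁿ h(bⁿ x)`, which satisfies
`f x = h x + a f(b x)`. -/
noncomputable def lacunarySeries {E : Type*} [NormedAddCommGroup E] [NormedSpace ℝ E]
    (a b : ℝ) (h : ℝ → E) (x : ℝ) : E :=
  ∑' n : ℕ, a ^ n • h (b ^ n * x)

namespace lacunarySeries

variable {E : Type*} [NormedAddCommGroup E] [NormedSpace ℝ E] {a b C : ℝ}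
  {h : ℝ → E}

theorem norm_term_le (a b : ℝ) (hC : ∀ x, ‖h x‖ ≤ C) (n : ℕ) (x : ℝ) :
    ‖a ^ n • h (b ^ n * x)‖ ≤ |a| ^ n * C := by
  rw [norm_smul, norm_pow, Real.norm_eq_abs]
  gcongr
  exact hC _

theorem summable_bound (ha : |a| < 1) (C : ℝ) : Summable fun n : ℕ => |a| ^ n * C :=
  (summable_geometric_of_lt_one (abs_nonneg a) ha).mul_right C

variable [CompleteSpace E]

theorem summable (ha : |a| < 1) (hC : ∀ x, ‖h x‖ ≤ C) (b x : ℝ) :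
    Summable fun n : ℕ => a ^ n • h (b ^ n * x) :=
  .of_norm_bounded (summable_bound ha C) (norm_term_le a b hC · x)

protected theorem continuous (ha : |a| < 1) (hC : ∀ x, ‖h x‖ ≤ C) (hh : Continuous h) (b : ℝ) :
    Continuous (lacunarySeries a b h) :=
  continuous_tsum (fun _ => by fun_prop) (summable_bound ha C) (norm_term_le a b hC)

theorem hasDerivAt {D : ℝ} (ha : |a| < 1) (hab : |a * b| < 1) (hC : ∀ x, ‖h x‖ ≤ C)
    (hh : Differentiable ℝ h) (hD : ∀ x, ‖deriv h x‖ ≤ D) (x : ℝ) :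
    HasDerivAt (lacunarySeries a b h) (lacunarySeries (a * b) b (deriv h) x) x := by
  refine hasDerivAt_tsum (summable_bound hab D) (fun n y => ?_) (norm_term_le (a * b) b hD)
    (summable ha hC b 0) x
  have hinner : HasDerivAt (fun y : ℝ => b ^ n * y) (b ^ n) y := by
    simpa only [mul_one, id] using (hasDerivAt_id y).const_mul (b ^ n)
  simpa only [smul_smul, mul_pow] using! ((hh _).hasDerivAt.scomp y hinner).const_smul (a ^ n)

theorem contDiff_one {D : ℝ} (ha : |a| < 1) (hab : |a * b| < 1) (hC : ∀ x, ‖h x‖ ≤ C)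
    (hh : ContDiff ℝ 1 h) (hD : ∀ x, ‖deriv h x‖ ≤ D) :
    ContDiff ℝ 1 (lacunarySeries a b h) := by
  have hderiv := hasDerivAt ha hab hC (hh.differentiable one_ne_zero) hD
  rw [contDiff_one_iff_deriv, funext fun x => (hderiv x).deriv]
  exact ⟨fun x => (hderiv x).differentiableAt,
    lacunarySeries.continuous hab hD (hh.continuous_deriv le_rfl) b⟩

theorem exists_holderWith {K r : ℝ≥0} (ha : |a| < 1) (hab : |a| * |b| ^ (r : ℝ) < 1)
    (hC : ∀ x, ‖h x‖ ≤ C) (hh : HolderWith K r h) :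
    ∃ K', HolderWith K' r (lacunarySeries a b h) := by
  have hterm (n : ℕ) : HolderWith (K * (‖a‖₊ * ‖b‖₊ ^ (r : ℝ)) ^ n) r
      (fun x => a ^ n • h (b ^ n * x)) := by
    have := (hh.comp (lipschitzWith_smul (b ^ n)).holderWith).smul (a ^ n)
    convert! this using 1
    · rw [mul_pow, nnnorm_pow, nnnorm_pow, ← NNReal.rpow_natCast_mul, ← NNReal.rpow_mul_natCast,
        mul_comm (n : ℝ)]
      ring
    · simp
  have hgeom : Summable fun n => K * (‖a‖₊ * ‖b‖₊ ^ (r : ℝ)) ^ n :=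
    (NNReal.summable_geometric (by exact_mod_cast hab)).mul_left K
  exact ⟨_, holderWith_tsum hgeom hterm (summable ha hC b)⟩

end lacunarySeries

section Digits

theorem exists_pow_mul_ofDigits_eq {b : ℕ} (d : ℕ → Fin b) (n : ℕ) :
    ∃ m : ℕ, (b : ℝ) ^ n * Real.ofDigits d = m + Real.ofDigits (fun i => d (i + n)) := by
  have hb : (b : ℝ) ≠ 0 := Nat.cast_ne_zero.2 (d 0).pos.ne'
  refine ⟨∑ i ∈ Finset.range n, d i * b ^ (n - (i + 1)), ?_⟩
  rw [Real.ofDigits_eq_sum_add_ofDigits d n, mul_add, mul_inv_cancel_left₀ (pow_ne_zero n hb),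
    Finset.mul_sum, Nat.cast_sum]
  congr 1
  refine Finset.sum_congr rfl fun i hi => ?_
  rw [Real.ofDigitsTerm, Nat.cast_mul, Nat.cast_pow,
    pow_sub₀ _ hb (Finset.mem_range.1 hi), mul_left_comm]

theorem ofDigits_mem_Icc {b : ℕ} (d : ℕ → Fin b) :
    Real.ofDigits d ∈ Icc (d 0 / b : ℝ) ((d 0 + 1) / b) := by
  have hb : (0 : ℝ) < b := Nat.cast_pos.2 (d 0).pos
  have hsplit : Real.ofDigits d = (d 0 + Real.ofDigits (fun i => d (i + 1))) / b := by
    rw [Real.ofDigits_eq_sum_add_ofDigits d 1, Finset.sum_range_one, Real.ofDigitsTerm]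
    ring
  rw [hsplit]
  constructor <;> gcongr
  · exact le_add_of_nonneg_right (Real.ofDigits_nonneg _)
  · exact Real.ofDigits_le_one _

/-- In base `2 * N` the even digits leave a gap after each of the `N` admissible intervals. -/
theorem exists_forall_pow_mul_sub_natCast_mem_Icc {N : ℕ} (d : ℕ → Fin N) :
    ∃ x ∈ Icc (0 : ℝ) 1, ∀ n, ∃ m : ℕ,
      (N * 2 : ℝ) ^ n * x - m ∈ Icc (d n / N : ℝ) ((d n + 1 / 2) / N) := by
  have hN : (0 : ℝ) < N := Nat.cast_pos.2 (d 0).pos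
  let e (n : ℕ) : Fin (N * 2) := finProdFinEquiv (d n, 0)
  have he (n : ℕ) : ((e n : ℕ) : ℝ) = 2 * d n := by simp [e]
  refine ⟨Real.ofDigits e, ⟨Real.ofDigits_nonneg e, Real.ofDigits_le_one e⟩, fun n => ?_⟩
  obtain ⟨m, hm⟩ := exists_pow_mul_ofDigits_eq e n
  have hmem := ofDigits_mem_Icc fun i => e (i + n)
  have hlower : (2 * d n : ℝ) / (N * 2) = d n / N := by field_simp
  have hupper : (2 * d n + 1 : ℝ) / (N * 2) = (d n + 1 / 2) / N := by field_simp
  rw [zero_add, he, Nat.cast_mul, Nat.cast_two, hlower, hupper] at hmem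
  rw [Nat.cast_mul, Nat.cast_two] at hm
  exact ⟨m, by rwa [hm, add_sub_cancel_left]⟩

theorem exists_digits_pair_hasSum {N : ℕ} (hN : 1 < N) {u : ℝ} (hu : u ∈ Icc (0 : ℝ) 1) :
    ∃ d e : ℕ → Fin N,
      HasSum (fun n => ((1 : ℝ) / N ^ 2) ^ n * ((N * d n + e n) / N ^ 2)) u := by
  obtain ⟨w, -, rfl⟩ := Real.ofDigits_SurjOn (one_lt_mul'' hN hN) hu
  refine ⟨fun n => (w n).divNat, fun n => (w n).modNat, ?_⟩
  have hterm (n : ℕ) : ((1 : ℝ) / N ^ 2) ^ n * ((N * (w n).divNat + (w n).modNat) / N ^ 2) =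
      Real.ofDigitsTerm w n := by
    have hsplit : (N * (w n).divNat + (w n).modNat : ℝ) = w n := by
      exact_mod_cast Nat.div_add_mod (w n : ℕ) N
    rw [hsplit, Real.ofDigitsTerm, Nat.cast_mul, pow_succ _ n, mul_inv, ← inv_pow]
    ring
  simpa only [hterm, Real.ofDigits] using Real.summable_ofDigitsTerm.hasSum

end Digits

/-- A smooth `1`-periodic bump, equal to `1` within distance `r` of `ℤ` and to `0` at distance at
least `R` from `ℤ`. The intended range is `0 ≤ r < R ≤ 1 / 2`. -/
noncomputable def periodicBump (r R t : ℝ) : ℝ :=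
  Real.smoothTransition ((Real.cos (2 * Real.pi * t) - Real.cos (2 * Real.pi * R)) /
    (Real.cos (2 * Real.pi * r) - Real.cos (2 * Real.pi * R)))

namespace periodicBump

variable {r R t : ℝ}

protected theorem contDiff (r R : ℝ) {n : ℕ∞} : ContDiff ℝ n (periodicBump r R) :=
  Real.smoothTransition.contDiff.comp
    (((Real.contDiff_cos.comp (contDiff_const.mul contDiff_id)).sub contDiff_const).div_const _)

protected theorem periodic (r R : ℝ) : Periodic (periodicBump r R) 1 := fun t => by
  rw [periodicBump, mul_add, mul_one, Real.cos_add_two_pi, periodicBump]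

theorem cos_two_pi_mul_abs_sub_round (t : ℝ) :
    Real.cos (2 * Real.pi * |t - round t|) = Real.cos (2 * Real.pi * t) := by
  rw [← abs_of_pos Real.two_pi_pos, ← abs_mul, Real.cos_abs, abs_of_pos Real.two_pi_pos, mul_sub,
    mul_comm (2 * Real.pi) (round t : ℝ), Real.cos_sub_int_mul_two_pi]

theorem strictAntiOn_cos_two_pi_mul :
    StrictAntiOn (fun t => Real.cos (2 * Real.pi * t)) (Icc 0 (1 / 2)) := by
  refine Real.strictAntiOn_cos.comp_strictMonoOn
    (fun s _ t _ hst => mul_lt_mul_of_pos_left hst Real.two_pi_pos) fun t ht => ?_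
  constructor <;> nlinarith [ht.1, ht.2, Real.pi_pos]

theorem eq_one (hr : 0 ≤ r) (hrR : r < R) (hR : R ≤ 1 / 2) (m : ℤ) (ht : |t - m| ≤ r) :
    periodicBump r R t = 1 := by
  have hround := (round_le t m).trans ht
  refine Real.smoothTransition.one_of_one_le ?_
  have hlt := strictAntiOn_cos_two_pi_mul ⟨hr, by linarith⟩ ⟨by linarith, hR⟩ hrR
  have hle := strictAntiOn_cos_two_pi_mul.antitoneOn ⟨abs_nonneg _, by linarith⟩
    ⟨hr, by linarith⟩ hround
  simp only [cos_two_pi_mul_abs_sub_round] at hle hlt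
  rw [one_le_div (sub_pos.2 hlt)]
  exact sub_le_sub_right hle _

theorem eq_zero (hr : 0 ≤ r) (hrR : r < R) (ht : ∀ m : ℤ, R ≤ |t - m|) :
    periodicBump r R t = 0 := by
  have hle_half := abs_sub_round t
  have hround := ht (round t)
  refine Real.smoothTransition.zero_of_nonpos ?_
  have hlt := strictAntiOn_cos_two_pi_mul ⟨hr, by linarith⟩ ⟨by linarith, by linarith⟩ hrR
  have hle := strictAntiOn_cos_two_pi_mul.antitoneOn ⟨by linarith, by linarith⟩
    ⟨abs_nonneg _, hle_half⟩ hround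
  simp only [cos_two_pi_mul_abs_sub_round] at hle hlt
  exact div_nonpos_of_nonpos_of_nonneg (sub_nonpos.2 hle) (sub_pos.2 hlt).le

theorem deriv_eq_zero (ht : periodicBump r R t = 1 ∨ periodicBump r R t = 0) :
    deriv (periodicBump r R) t = 0 := by
  rcases ht with hmax | hmin
  · exact IsLocalMax.deriv_eq_zero <| .of_forall fun _ =>
      hmax.symm ▸ Real.smoothTransition.le_one _
  · exact IsLocalMin.deriv_eq_zero <| .of_forall fun _ =>
      hmin.symm ▸ Real.smoothTransition.nonneg _

end periodicBump

/-- A smooth `1`-periodic function with the plateaus `[k / N, (k + 1/2) / N]`, `k < N`,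
on which it takes the value `v k`. -/
noncomputable def plateauFunction {E : Type*} [NormedAddCommGroup E] [NormedSpace ℝ E] {N : ℕ}
    (v : Fin N → E) (t : ℝ) : E :=
  ∑ k : Fin N, periodicBump (1 / (4 * N)) (1 / (2 * N)) (t - (k + 1 / 4) / N) • v k

namespace plateauFunction

variable {E : Type*} [NormedAddCommGroup E] [NormedSpace ℝ E] {N : ℕ}

protected theorem contDiff (v : Fin N → E) {n : ℕ∞} : ContDiff ℝ n (plateauFunction v) :=
  ContDiff.sum fun _ _ =>
    ((periodicBump.contDiff _ _).comp (contDiff_id.sub contDiff_const)).smul contDiff_const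

protected theorem periodic (v : Fin N → E) : Periodic (plateauFunction v) 1 := fun t => by
  simp only [plateauFunction, add_sub_right_comm t 1, periodicBump.periodic _ _ _]

theorem one_le_abs_sub_sub_mul {j k : Fin N} (hjk : j ≠ k) (m : ℤ) :
    (1 : ℝ) ≤ |(k : ℝ) - j - m * N| := by
  have hne : (k - j - m * N : ℤ) ≠ 0 := fun h => by
    have hdvd : (N : ℤ) ∣ k - j := ⟨m, by linarith⟩
    have hlt : |(k - j : ℤ)| < N := abs_lt.2 ⟨by omega, by omega⟩
    have := Int.eq_zero_of_abs_lt_dvd hdvd hlt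
    omega
  exact_mod_cast Int.one_le_abs hne

theorem periodicBump_eq_ite {k : Fin N} {t : ℝ} (ht : t ∈ Icc (k / N : ℝ) ((k + 1 / 2) / N))
    (j : Fin N) :
    periodicBump (1 / (4 * N)) (1 / (2 * N)) (t - (j + 1 / 4) / N) = if j = k then 1 else 0 := by
  have hN : (0 : ℝ) < N := Nat.cast_pos.2 k.pos
  have hr : (0 : ℝ) ≤ 1 / (4 * N) := by positivity
  have hrR : (1 : ℝ) / (4 * N) < 1 / (2 * N) := by gcongr; norm_num
  have hR : (1 : ℝ) / (2 * N) ≤ 1 / 2 := by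
    gcongr
    linarith [Nat.one_le_cast (α := ℝ).2 k.pos]
  rw [mem_Icc, div_le_iff₀ hN, le_div_iff₀ hN] at ht
  have hoffset : |t * N - k - 1 / 4| ≤ 1 / 4 := abs_le.2 ⟨by linarith, by linarith⟩
  have hscale (m : ℤ) : |t - (j + 1 / 4) / N - m| =
      |(t * N - k - 1 / 4) + (k - j - m * N)| / N := by
    rw [← abs_of_pos hN, ← abs_div, abs_of_pos hN]
    congr 1
    field_simp
    ring
  split_ifs with hjk
  · refine periodicBump.eq_one hr hrR hR 0 ?_
    rw [hscale, hjk, Int.cast_zero, zero_mul, sub_self, sub_zero, add_zero, ← div_div]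
    gcongr
  · refine periodicBump.eq_zero hr hrR fun m => ?_
    rw [hscale, ← div_div]
    gcongr
    have htriangle := abs_sub_abs_le_abs_add (k - j - m * N : ℝ) (t * N - k - 1 / 4)
    rw [add_comm] at htriangle
    linarith [one_le_abs_sub_sub_mul hjk m]

theorem eq_of_mem_Icc (v : Fin N → E) {k : Fin N} {t : ℝ}
    (ht : t ∈ Icc (k / N : ℝ) ((k + 1 / 2) / N)) : plateauFunction v t = v k := by
  simp only [plateauFunction, periodicBump_eq_ite ht, ite_smul, one_smul, zero_smul,
    Finset.sum_ite_eq', Finset.mem_univ, if_true]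

theorem deriv_eq_zero_of_mem_Icc (v : Fin N → E) {k : Fin N} {t : ℝ}
    (ht : t ∈ Icc (k / N : ℝ) ((k + 1 / 2) / N)) : deriv (plateauFunction v) t = 0 := by
  have hterm (j : Fin N) : HasDerivAt (fun s =>
      periodicBump (1 / (4 * N)) (1 / (2 * N)) (s - (j + 1 / 4) / N) • v j) 0 t := by
    have hbump := ((periodicBump.contDiff (1 / (4 * N)) (1 / (2 * N)) (n := 1)).differentiable
      one_ne_zero (t - (j + 1 / 4) / N)).hasDerivAt
    rw [periodicBump.deriv_eq_zero
      ((ite_eq_or_eq _ _ _).imp (periodicBump_eq_ite ht j).trans (periodicBump_eq_ite ht j).trans)]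
      at hbump
    simpa only [zero_smul] using (hbump.comp_sub_const t _).smul_const (v j)
  have hsum := (HasDerivAt.fun_sum (u := Finset.univ) fun j _ => hterm j).deriv
  rwa [Finset.sum_const_zero] at hsum

theorem exists_forall_eq_and_deriv_eq_zero (v : Fin N → E) (d : ℕ → Fin N) :
    ∃ x ∈ Icc (0 : ℝ) 1, ∀ n, plateauFunction v ((N * 2) ^ n * x) = v (d n) ∧
      deriv (plateauFunction v) ((N * 2) ^ n * x) = 0 := by
  obtain ⟨x, hx, hxd⟩ := exists_forall_pow_mul_sub_natCast_mem_Icc d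
  refine ⟨x, hx, fun n => ?_⟩
  obtain ⟨m, hm⟩ := hxd n
  have hper := plateauFunction.periodic v
  rw [← hper.sub_nat_mul_eq m, ← (periodic_deriv hper).sub_nat_mul_eq m, mul_one]
  exact ⟨eq_of_mem_Icc v hm, deriv_eq_zero_of_mem_Icc v hm⟩

end plateauFunction

theorem exists_contDiff_forall_digits_hasSum {E : Type*} [NormedAddCommGroup E] [NormedSpace ℝ E]
    [CompleteSpace E] {N : ℕ} {a : ℝ} {r : ℝ≥0} (hr : r ≤ 1) (hN : 0 < N)
    (haN : |a| * (N * 2) ^ (1 + r : ℝ) < 1) (v : Fin N → E) :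
    ∃ f : ℝ → E, ContDiff ℝ 1 f ∧ (∃ K, HolderWith K r (fderiv ℝ f)) ∧
      ∀ d : ℕ → Fin N, ∃ x ∈ Icc (0 : ℝ) 1,
        fderiv ℝ f x = 0 ∧ HasSum (fun n => a ^ n • v (d n)) (f x) := by
  have hb : (1 : ℝ) ≤ N * 2 := by linarith [Nat.one_le_cast (α := ℝ).2 hN]
  have ha : |a| < 1 :=
    (le_mul_of_one_le_right (abs_nonneg a) (Real.one_le_rpow hb (by positivity))).trans_lt haN
  have habr : |a * (N * 2 : ℝ)| * |(N * 2 : ℝ)| ^ (r : ℝ) < 1 := by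
    rwa [abs_mul, abs_of_nonneg (by positivity : (0 : ℝ) ≤ N * 2), mul_assoc,
      ← Real.rpow_one_add' (by positivity) (by positivity)]
  have hab : |a * (N * 2 : ℝ)| < 1 :=
    (le_mul_of_one_le_right (abs_nonneg _)
      (Real.one_le_rpow (hb.trans (le_abs_self _)) r.coe_nonneg)).trans_lt habr
  have hh : ContDiff ℝ 2 (plateauFunction v) := plateauFunction.contDiff v
  have hh' : ContDiff ℝ 1 (deriv (plateauFunction v)) :=
    ((contDiff_succ_iff_deriv (n := 1)).1 hh).2.2
  have hper := plateauFunction.periodic v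
  obtain ⟨C, hC⟩ := exists_forall_norm_le_of_periodic one_ne_zero hper hh.continuous
  obtain ⟨D, hD⟩ := exists_forall_norm_le_of_periodic one_ne_zero (periodic_deriv hper)
    hh'.continuous
  obtain ⟨K, hK⟩ := exists_holderWith_of_periodic one_ne_zero (periodic_deriv hper) hh' hr
  have hderiv := lacunarySeries.hasDerivAt ha hab hC (hh.differentiable two_ne_zero) hD
  refine ⟨lacunarySeries a (N * 2) (plateauFunction v),
    lacunarySeries.contDiff_one ha hab hC (hh.of_le one_le_two) hD, ?_, fun d => ?_⟩
  · simp only [holderWith_fderiv_iff_deriv, funext fun x => (hderiv x).deriv]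
    exact lacunarySeries.exists_holderWith hab habr hD hK
  · obtain ⟨x, hx, hxd⟩ := plateauFunction.exists_forall_eq_and_deriv_eq_zero v d
    refine ⟨x, hx, ?_, ?_⟩
    · simp only [← toSpanSingleton_deriv, (hderiv x).deriv, lacunarySeries, (hxd _).2, smul_zero,
        tsum_zero, ContinuousLinearMap.toSpanSingleton_zero]
    · simpa only [lacunarySeries, (hxd _).1] using
        (lacunarySeries.summable ha hC (N * 2) x).hasSum

theorem exists_contDiff_forall_digits_pair_hasSum {E : Type*} [NormedAddCommGroup E]
    [NormedSpace ℝ E] [CompleteSpace E] {N : ℕ} {a : ℝ} {r : ℝ≥0} (hr : r ≤ 1) (hN : 0 < N)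
    (haN : |a| * (N * 2) ^ (1 + r : ℝ) < 1) (v w : Fin N → E) :
    ∃ F : ℝ × ℝ → E, ContDiff ℝ 1 F ∧ (∃ K, HolderWith K r (fderiv ℝ F)) ∧
      ∀ d e : ℕ → Fin N, ∃ p ∈ Icc (0 : ℝ) 1 ×ˢ Icc (0 : ℝ) 1,
        fderiv ℝ F p = 0 ∧ HasSum (fun n => a ^ n • (v (d n) + w (e n))) (F p) := by
  obtain ⟨f, hf, ⟨C, hC⟩, hfd⟩ := exists_contDiff_forall_digits_hasSum hr hN haN v
  obtain ⟨g, hg, ⟨D, hD⟩, hge⟩ := exists_contDiff_forall_digits_hasSum hr hN haN w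
  have hf' := hf.differentiable one_ne_zero
  have hg' := hg.differentiable one_ne_zero
  refine ⟨fun p => f p.1 + g p.2, (hf.comp contDiff_fst).add (hg.comp contDiff_snd),
    exists_holderWith_fderiv_fst_add_snd hf' hg' hC hD, fun d e => ?_⟩
  obtain ⟨x, hx, hfx, hsumx⟩ := hfd d
  obtain ⟨y, hy, hgy, hsumy⟩ := hge e
  refine ⟨(x, y), ⟨hx, hy⟩, ?_, ?_⟩
  · rw [fderiv_fst_add_snd hf' hg', hfx, hgy, ContinuousLinearMap.zero_comp,
      ContinuousLinearMap.zero_comp, add_zero]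
  · simpa only [smul_add] using hsumx.add hsumy

theorem exists_nat_mul_two_rpow_lt_sq {s : ℝ} (hs : s < 2) :
    ∃ N : ℕ, 1 < N ∧ (N * 2 : ℝ) ^ s < N ^ 2 := by
  have hlim : Tendsto (fun N : ℕ => (N : ℝ) ^ (2 - s)) atTop atTop :=
    (tendsto_rpow_atTop (sub_pos.2 hs)).comp tendsto_natCast_atTop_atTop
  obtain ⟨N, hlarge, hN⟩ := ((hlim.eventually_gt_atTop (2 ^ s)).and (eventually_gt_atTop 1)).exists
  refine ⟨N, hN, ?_⟩
  have hpos : (0 : ℝ) < N := by positivity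
  rw [Real.rpow_sub hpos, lt_div_iff₀ (Real.rpow_pos_of_pos hpos s)] at hlarge
  rw [mul_comm, Real.mul_rpow zero_le_two hpos.le]
  exact_mod_cast hlarge

theorem one_le_one_div_three_rpow_sub_two :
    (1 : ℝ) ≤ 1 / ((3 : ℝ) ^ ((2 : ℝ) / 3) - 2) := by
  have hgt : (2 : ℝ) < 3 ^ ((2 : ℝ) / 3) := by
    rw [← Real.rpow_lt_rpow_iff (z := 3) zero_le_two (by positivity) three_pos,
      ← Real.rpow_mul three_pos.le]
    norm_num
  have hle : (3 : ℝ) ^ ((2 : ℝ) / 3) ≤ 3 :=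
    Real.rpow_le_self_of_one_le (by norm_num) (by norm_num)
  rw [one_le_div (sub_pos.2 hgt)]
  linarith

theorem exists_C1_all_values_critical_general {r : ℝ≥0} (hr : r < 1) (A B : ℝ) :
    ∃ F : ℝ × ℝ → ℝ, ContDiff ℝ 1 F ∧ (∃ K, HolderWith K r (fderiv ℝ F)) ∧
      ∀ u ∈ Icc A B, ∃ p ∈ Icc (0 : ℝ) 1 ×ˢ Icc (0 : ℝ) 1, fderiv ℝ F p = 0 ∧ F p = u := by
  obtain ⟨N, hN, hNr⟩ := exists_nat_mul_two_rpow_lt_sq (s := 1 + r)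
    (by linarith [NNReal.coe_lt_one.2 hr])
  have haN : |1 / (N : ℝ) ^ 2| * (N * 2 : ℝ) ^ (1 + r : ℝ) < 1 := by
    rwa [abs_of_pos (by positivity), one_div_mul_eq_div, div_lt_one (by positivity)]
  obtain ⟨F, hF, ⟨K, hK⟩, hFd⟩ := exists_contDiff_forall_digits_pair_hasSum hr.le
    (zero_lt_one.trans hN) haN (fun k : Fin N => (B - A) * (N * k / N ^ 2))
    fun k : Fin N => (B - A) * (k / N ^ 2)
  have hF' : fderiv ℝ (fun p => A + F p) = fderiv ℝ F := funext fun _ => fderiv_const_add A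
  rw [← hF'] at hK
  refine ⟨fun p => A + F p, contDiff_const.add hF, ⟨K, hK⟩, fun u hu => ?_⟩
  obtain ⟨s, hs, rfl⟩ : ∃ s ∈ Icc (0 : ℝ) 1, A + s * (B - A) = u := by
    simpa only [segment_eq_image', smul_eq_mul, mem_image] using
      (segment_eq_Icc (hu.1.trans hu.2)).ge hu
  obtain ⟨d, e, hde⟩ := exists_digits_pair_hasSum hN hs
  obtain ⟨p, hp, hFp, hsum⟩ := hFd d e
  refine ⟨p, hp, by rw [hF', hFp], congrArg (A + ·) (hsum.unique ?_)⟩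
  convert! hde.mul_right (B - A) using 2 with n
  rw [smul_eq_mul]
  ring

/-- With `M = 1 / (3^{2/3} - 2)`, there is a function `F : ℝ² → ℝ`, continuously
differentiable on `[0, M]²`, whose gradient is `1/2`-Hölder continuous on `[0, M]²`,
such that every `u ∈ [0, 2]` is a critical value of `F`. -/
theorem exists_C1_all_values_critical :
    ∃ (M : ℝ), M = 1 / ((3 : ℝ) ^ ((2 : ℝ) / 3) - 2) ∧
    ∃ F : ℝ × ℝ → ℝ,
      ContDiffOn ℝ 1 F (Set.Icc 0 M ×ˢ Set.Icc 0 M) ∧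
      (∃ K : ℝ, ∀ p ∈ Set.Icc 0 M ×ˢ Set.Icc 0 M, ∀ q ∈ Set.Icc 0 M ×ˢ Set.Icc 0 M,
        ‖fderiv ℝ F p - fderiv ℝ F q‖ ≤ K * ‖p - q‖ ^ ((1 : ℝ) / 2)) ∧
      (∀ u ∈ Set.Icc (0 : ℝ) 2, ∃ p ∈ Set.Icc 0 M ×ˢ Set.Icc 0 M,
        fderiv ℝ F p = 0 ∧ F p = u) := by
  obtain ⟨F, hF, ⟨K, hK⟩, hcrit⟩ :=
    exists_C1_all_values_critical_general (r := 1 / 2) (by norm_num) 0 2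
  refine ⟨_, rfl, F, hF.contDiffOn, ⟨K, fun p _ q _ => ?_⟩, fun u hu => ?_⟩
  · simpa only [dist_eq_norm, NNReal.coe_div, NNReal.coe_one, NNReal.coe_ofNat] using hK.dist_le p q
  · obtain ⟨p, hp, hFp⟩ := hcrit u hu
    have hsub := Icc_subset_Icc (le_refl (0 : ℝ)) one_le_one_div_three_rpow_sub_two
    exact ⟨p, prod_mono hsub hsub hp, hFp⟩
end

section
/- There exists a continuously differentiable function F : ℝ² → ℝ such that the set of critical values of F, namely F({p ∈ ℝ² : DF(p) = 0}), has positive Lebesgue measure. In particular, Sard's theorem fails for C¹ functions from ℝ² to ℝ. -/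
/-!
Let `f` be a `C¹` function which is critical at every `x = ∑ dₙ 3⁻⁽ⁿ⁺¹⁾` with digits
`dₙ ∈ {0, 1}`, and takes there the value `∑ dₙ 4⁻⁽ⁿ⁺¹⁾`. Every base-four digit is `d + 2 d'` with
`d, d' ∈ {0, 1}`, so `(x, y) ↦ f x + 2 f y` takes every value in `[0, 1]` at a critical point.

To build `f`, take a smooth `1`-periodic `g` with values in `[0, 1]`, equal to `0` on `[0, 1/6]` and
to `1` on `[1/3, 1/2]`. Modulo `1`, the point `3ⁿ x` has the digits `dₙ, dₙ₊₁, …`, so it lies in the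
first interval if `dₙ = 0` and in the second if `dₙ = 1`: thus `g (3ⁿ x) = dₙ`, and `g' (3ⁿ x) = 0`
because an extreme value of `g` is attained. Then `f x = ∑ 4⁻⁽ⁿ⁺¹⁾ g (3ⁿ x)` works; it is `C¹`
because `3 < 4`.
-/

open MeasureTheory

namespace SardC1

open Function Real Set

section Calculus

lemma exists_norm_deriv_le_of_periodic {E : Type*} [NormedAddCommGroup E] [NormedSpace ℝ E]
    {g : ℝ → E} {T : ℝ} (hper : Periodic g T) (hT : T ≠ 0) (hg : ContDiff ℝ 1 g) :
    ∃ C, ∀ t, ‖deriv g t‖ ≤ C := by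
  have hper' : Periodic (deriv g) T := fun t => by
    rw [← deriv_comp_add_const, funext hper]
  obtain ⟨C, hC⟩ :=
    (hper'.isBounded_of_continuous hT (hg.continuous_deriv le_rfl)).exists_norm_le
  exact ⟨C, fun t => hC _ (mem_range_self t)⟩

lemma deriv_eq_zero_of_forall_mem_Icc {g : ℝ → ℝ} {u v t : ℝ} (hg : ∀ s, g s ∈ Icc u v)
    (ht : g t = u ∨ g t = v) : deriv g t = 0 := by
  rcases ht with rfl | rfl
  · exact IsLocalMin.deriv_eq_zero (.of_forall fun s => (hg s).1)
  · exact IsLocalMax.deriv_eq_zero (.of_forall fun s => (hg s).2)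

lemma hasFDerivAt_fst_add_smul_snd_zero {𝕜 E₁ E₂ G : Type*} [NontriviallyNormedField 𝕜]
    [NormedAddCommGroup E₁] [NormedSpace 𝕜 E₁] [NormedAddCommGroup E₂] [NormedSpace 𝕜 E₂]
    [NormedAddCommGroup G] [NormedSpace 𝕜 G] {f₁ : E₁ → G} {f₂ : E₂ → G} {x : E₁} {y : E₂}
    (h₁ : HasFDerivAt f₁ (0 : E₁ →L[𝕜] G) x) (h₂ : HasFDerivAt f₂ (0 : E₂ →L[𝕜] G) y) (c : 𝕜) :
    HasFDerivAt (fun p : E₁ × E₂ => f₁ p.1 + c • f₂ p.2) (0 : E₁ × E₂ →L[𝕜] G) (x, y) := by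
  have hfst := h₁.comp (x, y) (hasFDerivAt_fst (𝕜 := 𝕜) (p := (x, y)))
  have hsnd := h₂.comp (x, y) (hasFDerivAt_snd (𝕜 := 𝕜) (p := (x, y)))
  simpa using! hfst.add (hsnd.const_smul c)

end Calculus

section DilationSeries

variable {E : Type*} [NormedAddCommGroup E] [NormedSpace ℝ E] {a c : ℕ → ℝ} {g : ℝ → E} {C : ℝ}

/-- The series `∑ aₙ g(cₙ x)` of dilates of a function `g`, with amplitudes `a` and frequencies
`c`, as in Weierstrass-type functions. Its value is `0` where the series diverges. -/
noncomputable def dilationSeries (a c : ℕ → ℝ) (g : ℝ → E) (x : ℝ) : E :=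
  ∑' n, a n • g (c n * x)

lemma norm_smul_comp_mul_le (hC : ∀ t, ‖g t‖ ≤ C) (n : ℕ) (x : ℝ) :
    ‖a n • g (c n * x)‖ ≤ |a n| * C := by
  rw [norm_smul, norm_eq_abs]
  gcongr
  exact hC _

variable [CompleteSpace E]

lemma continuous_dilationSeries (hg : Continuous g) (hC : ∀ t, ‖g t‖ ≤ C) (ha : Summable a) :
    Continuous (dilationSeries a c g) :=
  continuous_tsum (fun _ => by fun_prop) (ha.abs.mul_right C) (norm_smul_comp_mul_le hC)

lemma hasDerivAt_dilationSeries (hg : Differentiable ℝ g) (hC : ∀ t, ‖deriv g t‖ ≤ C)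
    (ha : Summable a) (hac : Summable (a * c)) (x : ℝ) :
    HasDerivAt (dilationSeries a c g) (dilationSeries (a * c) c (deriv g) x) x := by
  have hterm (n : ℕ) (y : ℝ) :
      HasDerivAt (fun y => a n • g (c n * y)) ((a * c) n • deriv g (c n * y)) y := by
    have hdil : HasDerivAt (fun y => c n * y) (c n) y := by
      simpa using (hasDerivAt_id y).const_mul (c n)
    simpa [mul_smul] using! ((hg _).hasDerivAt.scomp y hdil).const_smul (a n)
  have hsummable_zero : Summable fun n => a n • g (c n * 0) := by
    simpa using ha.smul_const (g 0)
  exact hasDerivAt_tsum (hac.abs.mul_right C) hterm (norm_smul_comp_mul_le hC) hsummable_zero x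

lemma contDiff_one_dilationSeries (hg : ContDiff ℝ 1 g) (hC : ∀ t, ‖deriv g t‖ ≤ C)
    (ha : Summable a) (hac : Summable (a * c)) : ContDiff ℝ 1 (dilationSeries a c g) := by
  have hderiv := hasDerivAt_dilationSeries (hg.differentiable one_ne_zero) hC ha hac
  rw [contDiff_one_iff_deriv, funext fun x => (hderiv x).deriv]
  exact ⟨fun x => (hderiv x).differentiableAt,
    continuous_dilationSeries (hg.continuous_deriv le_rfl) hC hac⟩

end DilationSeries

section Geometric

variable {b B : ℝ}

lemma summable_inv_pow_succ_mul_pow (hb : |b| < B) :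
    Summable ((fun n : ℕ => (B ^ (n + 1))⁻¹) * fun n => b ^ n) := by
  have hB : 0 < B := (abs_nonneg b).trans_lt hb
  have hratio : |b / B| < 1 := by rwa [abs_div, abs_of_pos hB, div_lt_one hB]
  refine ((summable_geometric_of_abs_lt_one hratio).mul_left B⁻¹).congr fun n => ?_
  simp only [Pi.mul_apply, div_pow, pow_succ]
  field

lemma summable_inv_pow_succ (hB : 1 < B) : Summable fun n : ℕ => (B ^ (n + 1))⁻¹ := by
  simpa [Pi.mul_def] using summable_inv_pow_succ_mul_pow (b := 1) (by simpa using hB)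

end Geometric

section Digits

variable {b : ℕ}

lemma mul_ofDigits (a : ℕ → Fin b) : b * ofDigits a = a 0 + ofDigits fun i => a (i + 1) := by
  have hb : (b : ℝ) ≠ 0 := mod_cast (Fin.pos (a 0)).ne'
  rw [ofDigits_eq_sum_add_ofDigits a 1]
  simp only [Finset.sum_range_one, ofDigitsTerm, zero_add, pow_one]
  field

lemma map_pow_mul_ofDigits_of_periodic {α : Type*} {g : ℝ → α} (hg : Periodic g 1)
    (a : ℕ → Fin b) (n : ℕ) : g (b ^ n * ofDigits a) = g (ofDigits fun i => a (i + n)) := by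
  induction n generalizing a with
  | zero => simp
  | succ n ih =>
    calc g (b ^ (n + 1) * ofDigits a)
        = g (b ^ n * (ofDigits fun i => a (i + 1)) + (b ^ n * a 0 : ℕ) * 1) := by
          rw [pow_succ, mul_assoc, mul_ofDigits]
          push_cast
          ring_nf
      _ = g (b ^ n * ofDigits fun i => a (i + 1)) := hg.nat_mul _ _
      _ = g (ofDigits fun i => a (i + (n + 1))) := by
          simp only [ih, add_assoc]

lemma ofDigits_eq_add_mul {q d e : ℕ → Fin b} {k : ℕ} (h : ∀ i, (q i : ℕ) = d i + k * e i) :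
    ofDigits q = ofDigits d + k * ofDigits e := by
  simp only [ofDigits]
  rw [← tsum_mul_left, ← summable_ofDigitsTerm.tsum_add (summable_ofDigitsTerm.mul_left _)]
  congr with i
  simp only [ofDigitsTerm, h]
  push_cast
  ring

lemma sub_one_mul_ofDigits_le {a : ℕ → Fin b} {m : ℕ} (ha : ∀ i, (a i : ℕ) ≤ m) :
    (b - 1) * ofDigits a ≤ m := by
  obtain rfl | hb := (Nat.one_le_of_lt (Fin.pos (a 0))).eq_or_lt
  · simp
  let last : Fin b := ⟨b - 1, Nat.sub_one_lt_of_lt hb⟩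
  have hterm (i : ℕ) : (b - 1) * ofDigitsTerm a i ≤ m * ofDigitsTerm (fun _ => last) i := by
    have hlast : (last : ℝ) = b - 1 := Nat.cast_pred (by lia)
    have hai : (a i : ℝ) ≤ m := mod_cast ha i
    have : (0 : ℝ) ≤ last := by positivity
    simp only [ofDigitsTerm, ← hlast, mul_left_comm (last : ℝ)]
    gcongr
  calc (b - 1) * ofDigits a = ∑' i, (b - 1) * ofDigitsTerm a i := tsum_mul_left.symm
    _ ≤ ∑' i, m * ofDigitsTerm (fun _ => last) i :=
        (summable_ofDigitsTerm.mul_left _).tsum_mono (summable_ofDigitsTerm.mul_left _) hterm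
    _ = m * ofDigits fun _ => last := tsum_mul_left
    _ = m := by rw [ofDigits_const_last_eq_one' hb, mul_one]

/-- The number with base-`b` digits `d`, all of them `0` or `1`. Keeping the digits in `Fin 2` lets
one sequence be read in different bases. -/
noncomputable def ofBinaryDigits (b : ℕ) [b.AtLeastTwo] (d : ℕ → Fin 2) : ℝ :=
  ofDigits fun i => (d i).castLE (Nat.AtLeastTwo.prop : 2 ≤ b)

end Digits

section Bump

/-- A smooth `1`-periodic function with values in `[0, 1]`, equal to `0` on `[0, 1/6]`, where
`cos (2πt) ≥ 1/2`, and to `1` on `[1/3, 1/2]`, where `cos (2πt) ≤ -1/2`. It reads off the first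
digit of ternary expansions with digits `0` and `1`. -/
noncomputable def periodicBump (t : ℝ) : ℝ := smoothTransition (1 / 2 - cos (2 * π * t))

lemma contDiff_periodicBump {n : ℕ∞} : ContDiff ℝ n periodicBump :=
  smoothTransition.contDiff.comp (by fun_prop)

lemma periodicBump_periodic : Periodic periodicBump 1 := fun t => by
  simp only [periodicBump, mul_add, mul_one, cos_add_two_pi]

lemma periodicBump_mem_Icc (t : ℝ) : periodicBump t ∈ Icc 0 1 :=
  ⟨smoothTransition.nonneg _, smoothTransition.le_one _⟩

lemma exists_norm_deriv_periodicBump_le : ∃ C, ∀ t, ‖deriv periodicBump t‖ ≤ C :=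
  exists_norm_deriv_le_of_periodic periodicBump_periodic one_ne_zero contDiff_periodicBump

lemma periodicBump_eq_zero {t : ℝ} (ht : t ∈ Icc 0 (1 / 6)) : periodicBump t = 0 := by
  apply smoothTransition.zero_of_nonpos
  have hcos : cos (π / 3) ≤ cos (2 * π * t) :=
    cos_le_cos_of_nonneg_of_le_pi (mul_nonneg two_pi_pos.le ht.1) (by linarith [pi_pos])
      (by nlinarith [pi_pos, ht.2])
  rw [cos_pi_div_three] at hcos
  linarith

lemma periodicBump_eq_one {t : ℝ} (ht : t ∈ Icc (1 / 3) (1 / 2)) : periodicBump t = 1 := by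
  apply smoothTransition.one_of_one_le
  have hcos : cos (2 * π * t) ≤ cos (π - π / 3) :=
    cos_le_cos_of_nonneg_of_le_pi (by linarith [pi_pos]) (by nlinarith [pi_pos, ht.2])
      (by nlinarith [pi_pos, ht.1])
  rw [cos_pi_sub, cos_pi_div_three] at hcos
  linarith

lemma periodicBump_ofBinaryDigits (d : ℕ → Fin 2) :
    periodicBump (ofBinaryDigits 3 d) = d 0 := by
  set tail : ℕ → Fin 3 := fun i => (d (i + 1)).castLE Nat.AtLeastTwo.prop
  have hhead : 3 * ofBinaryDigits 3 d = d 0 + ofDigits tail := mul_ofDigits _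
  have htail_nonneg := ofDigits_nonneg tail
  have hdigit_le (i : ℕ) : (tail i : ℕ) ≤ 1 := Nat.le_of_lt_succ (d (i + 1)).isLt
  have htail_le := sub_one_mul_ofDigits_le hdigit_le
  push_cast at htail_le
  obtain h | h : d 0 = 0 ∨ d 0 = 1 := by lia
  all_goals simp only [h, Fin.val_zero, Fin.val_one, Nat.cast_zero, Nat.cast_one] at hhead ⊢
  · exact periodicBump_eq_zero ⟨by linarith, by linarith⟩
  · exact periodicBump_eq_one ⟨by linarith, by linarith⟩

lemma periodicBump_three_pow_mul_ofBinaryDigits (d : ℕ → Fin 2) (n : ℕ) :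
    periodicBump (3 ^ n * ofBinaryDigits 3 d) = d n := by
  calc periodicBump (3 ^ n * ofBinaryDigits 3 d)
      = periodicBump (ofBinaryDigits 3 fun i => d (i + n)) :=
        map_pow_mul_ofDigits_of_periodic periodicBump_periodic _ n
    _ = d n := by rw [periodicBump_ofBinaryDigits, zero_add]

lemma deriv_periodicBump_three_pow_mul_ofBinaryDigits (d : ℕ → Fin 2) (n : ℕ) :
    deriv periodicBump (3 ^ n * ofBinaryDigits 3 d) = 0 := by
  apply deriv_eq_zero_of_forall_mem_Icc periodicBump_mem_Icc
  rw [periodicBump_three_pow_mul_ofBinaryDigits]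
  obtain h | h : d n = 0 ∨ d n = 1 := by lia
  all_goals simp [h]

end Bump

section Counterexample

/-- A `C¹` function that reinterprets ternary expansions with digits `0` and `1` as expansions in
base four: the amplitudes are the place values in base four, while the dilation by `3ⁿ` brings the
ternary digit number `n` to the front. -/
noncomputable def ternaryToQuaternary : ℝ → ℝ :=
  dilationSeries (fun n => ((4 : ℝ) ^ (n + 1))⁻¹) (fun n => 3 ^ n) periodicBump

lemma contDiff_ternaryToQuaternary : ContDiff ℝ 1 ternaryToQuaternary := by
  obtain ⟨C, hC⟩ := exists_norm_deriv_periodicBump_le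
  exact contDiff_one_dilationSeries contDiff_periodicBump hC
    (summable_inv_pow_succ (by norm_num)) (summable_inv_pow_succ_mul_pow (by norm_num))

lemma ternaryToQuaternary_ofBinaryDigits (d : ℕ → Fin 2) :
    ternaryToQuaternary (ofBinaryDigits 3 d) = ofBinaryDigits 4 d := by
  simp only [ternaryToQuaternary, dilationSeries, periodicBump_three_pow_mul_ofBinaryDigits]
  simp only [ofBinaryDigits, ofDigits, ofDigitsTerm, smul_eq_mul, mul_comm, Fin.val_castLE,
    Nat.cast_ofNat]

lemma hasFDerivAt_ternaryToQuaternary_ofBinaryDigits (d : ℕ → Fin 2) :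
    HasFDerivAt ternaryToQuaternary (0 : ℝ →L[ℝ] ℝ) (ofBinaryDigits 3 d) := by
  obtain ⟨C, hC⟩ := exists_norm_deriv_periodicBump_le
  have hderiv := hasDerivAt_dilationSeries (contDiff_periodicBump.differentiable one_ne_zero) hC
    (summable_inv_pow_succ (B := 4) (by norm_num))
    (summable_inv_pow_succ_mul_pow (b := 3) (by norm_num)) (ofBinaryDigits 3 d)
  simpa [dilationSeries, deriv_periodicBump_three_pow_mul_ofBinaryDigits, ternaryToQuaternary]
    using! hderiv.hasFDerivAt

/-- The counterexample to Sard's theorem for `C¹` functions `ℝ² → ℝ`. Its two terms contribute the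
two binary digits of each base-four digit. -/
noncomputable def sardCounterexample (p : ℝ × ℝ) : ℝ :=
  ternaryToQuaternary p.1 + 2 * ternaryToQuaternary p.2

lemma contDiff_sardCounterexample : ContDiff ℝ 1 sardCounterexample :=
  (contDiff_ternaryToQuaternary.comp contDiff_fst).add
    (contDiff_const.mul (contDiff_ternaryToQuaternary.comp contDiff_snd))

lemma Icc_subset_image_critical_sardCounterexample :
    Icc 0 1 ⊆ sardCounterexample '' {p | fderiv ℝ sardCounterexample p = 0} := by
  intro z hz
  obtain ⟨q, -, rfl⟩ := ofDigits_SurjOn (b := 4) (by decide) hz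
  let d (i : ℕ) : Fin 2 := (q i).modNat (m := 2)
  let e (i : ℕ) : Fin 2 := (q i).divNat (n := 2)
  have hq (i : ℕ) : (q i : ℕ) = d i + 2 * e i := (Nat.mod_add_div _ 2).symm
  refine ⟨(ofBinaryDigits 3 d, ofBinaryDigits 3 e), ?_, ?_⟩
  · exact (hasFDerivAt_fst_add_smul_snd_zero (hasFDerivAt_ternaryToQuaternary_ofBinaryDigits d)
      (hasFDerivAt_ternaryToQuaternary_ofBinaryDigits e) 2).fderiv
  · simp only [sardCounterexample, ternaryToQuaternary_ofBinaryDigits]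
    exact (ofDigits_eq_add_mul hq).symm

end Counterexample

end SardC1

/-- There exists a `C¹` function `F : ℝ² → ℝ` whose set of critical values has
positive Lebesgue measure: Sard's theorem fails for `C¹` functions `ℝ² → ℝ`. -/
theorem exists_contDiff_one_volume_image_critical_pos :
    ∃ F : ℝ × ℝ → ℝ, ContDiff ℝ 1 F ∧
      0 < volume (F '' {p : ℝ × ℝ | fderiv ℝ F p = 0}) := by
  refine ⟨SardC1.sardCounterexample, SardC1.contDiff_sardCounterexample, ?_⟩
  calc (0 : ENNReal) < volume (Set.Icc (0 : ℝ) 1) := by simp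
    _ ≤ _ := measure_mono SardC1.Icc_subset_image_critical_sardCounterexample
end

section
/- For every α with 0 < α < log(3/2)/log 2, setting M_α = 1/(3^{1/(1+α)} − 2), there exists a strictly increasing, continuously differentiable function f : [0, M_α] → [0, 1] whose derivative is α-Hölder continuous, such that f(0) = 0, f(M_α) = 1, the zero set A = {x ∈ [0, M_α] : f′(x) = 0} has Lebesgue measure zero, and f(A) equals the Cantor ternary set C. -/
open MeasureTheory

/-!
Let `K ⊆ [0, M]` be the central Cantor set of ratio `r < 1/2`. The distance to `K` gets multiplied
by `r` under both contractions `x ↦ r x` and `x ↦ (1 - r) M + r x` generating `K`, so the increments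
of a primitive of `infDist · K ^ α` get multiplied by `r ^ (1 + α)`. The primitive therefore
conjugates these contractions to those generating a central Cantor set of ratio `r ^ (1 + α)`, and
maps `K`, the zero set of its derivative, onto that Cantor set; the choice
`r = (1/3) ^ (1 / (1 + α))` yields `cantorSet`.
-/

section HolderDensity

lemma abs_rpow_sub_rpow_le {p a b : ℝ} (hp0 : 0 ≤ p) (hp1 : p ≤ 1) (ha : 0 ≤ a) (hb : 0 ≤ b) :
    |a ^ p - b ^ p| ≤ |a - b| ^ p := by
  wlog hba : b ≤ a generalizing a b
  · simpa only [abs_sub_comm] using this hb ha (le_of_not_ge hba)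
  rw [abs_of_nonneg (sub_nonneg.2 (Real.rpow_le_rpow hb hba hp0)),
    abs_of_nonneg (sub_nonneg.2 hba), sub_le_iff_le_add]
  simpa only [sub_add_cancel] using Real.rpow_add_le_add_rpow (sub_nonneg.2 hba) hb hp0 hp1

lemma abs_infDist_rpow_sub_infDist_rpow_le {X : Type*} [PseudoMetricSpace X] {p : ℝ}
    (hp0 : 0 ≤ p) (hp1 : p ≤ 1) (s : Set X) (x y : X) :
    |Metric.infDist x s ^ p - Metric.infDist y s ^ p| ≤ dist x y ^ p := by
  have hlip : |Metric.infDist x s - Metric.infDist y s| ≤ dist x y := by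
    simpa only [Real.dist_eq, NNReal.coe_one, one_mul] using
      (Metric.lipschitz_infDist_pt s).dist_le_mul x y
  calc |Metric.infDist x s ^ p - Metric.infDist y s ^ p|
      ≤ |Metric.infDist x s - Metric.infDist y s| ^ p :=
        abs_rpow_sub_rpow_le hp0 hp1 Metric.infDist_nonneg Metric.infDist_nonneg
    _ ≤ dist x y ^ p := Real.rpow_le_rpow (abs_nonneg _) hlip hp0

lemma strictMono_integral_of_nonneg {g : ℝ → ℝ} (hg : Continuous g) (hg0 : ∀ x, 0 ≤ g x)
    (hnull : volume {x | g x = 0} = 0) (a : ℝ) : StrictMono fun x ↦ ∫ t in a..x, g t := by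
  intro x y hxy
  have hsub : (∫ t in a..y, g t) - ∫ t in a..x, g t = ∫ t in x..y, g t :=
    intervalIntegral.integral_interval_sub_left (hg.intervalIntegrable _ _)
      (hg.intervalIntegrable _ _)
  rw [← sub_pos, hsub]
  refine intervalIntegral.integral_pos hxy hg.continuousOn (fun t _ ↦ hg0 t) ?_
  by_contra! hnonpos
  have hIcc : volume (Set.Icc x y) = 0 :=
    measure_mono_null (fun t ht ↦ le_antisymm (hnonpos t ht) (hg0 t)) hnull
  rw [Real.volume_Icc, ENNReal.ofReal_eq_zero] at hIcc
  linarith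

end HolderDensity

/-- The two contractions of ratio `r` of `[0, M]`: `false` selects the one fixing `0`, `true` the
one fixing `M`. -/
def cantorBranch (r M : ℝ) (b : Bool) (x : ℝ) : ℝ := (bif b then (1 - r) * M else 0) + r * x

/-- The point with address `a` in the central Cantor set of ratio `r` in `[0, M]`, that is, the
limit of `cantorBranch r M (a 0) ∘ ⋯ ∘ cantorBranch r M (a n)`. -/
noncomputable def cantorPoint (r M : ℝ) (a : ℕ → Bool) : ℝ :=
  ∑' n, bif a n then (1 - r) * M * r ^ n else 0

/-- The central Cantor set of ratio `r` in `[0, M]`, obtained by repeatedly removing from each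
interval the central open subinterval of relative length `1 - 2 r`; it is encoded as the set of
points having an address. -/
def centralCantorSet (r M : ℝ) : Set ℝ := Set.range (cantorPoint r M)

section CentralCantorSet

variable {r M : ℝ}

lemma dist_cantorBranch (hr0 : 0 ≤ r) (b : Bool) (x y : ℝ) :
    dist (cantorBranch r M b x) (cantorBranch r M b y) = r * dist x y := by
  rw [cantorBranch, cantorBranch, dist_add_left, Real.dist_eq, Real.dist_eq, ← mul_sub, abs_mul,
    abs_of_nonneg hr0]

lemma norm_cantorPoint_term_le (hr0 : 0 ≤ r) (a : ℕ → Bool) (n : ℕ) :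
    ‖bif a n then (1 - r) * M * r ^ n else 0‖ ≤ |(1 - r) * M| * r ^ n := by
  cases a n
  · simpa only [cond_false, norm_zero] using by positivity
  · rw [cond_true, Real.norm_eq_abs, abs_mul, abs_of_nonneg (pow_nonneg hr0 n)]

lemma summable_abs_mul_pow (hr0 : 0 ≤ r) (hr1 : r < 1) :
    Summable fun n : ℕ ↦ |(1 - r) * M| * r ^ n :=
  (summable_geometric_of_lt_one hr0 hr1).mul_left _

lemma summable_cantorPoint (hr0 : 0 ≤ r) (hr1 : r < 1) (a : ℕ → Bool) :
    Summable fun n ↦ bif a n then (1 - r) * M * r ^ n else 0 :=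
  .of_norm_bounded (summable_abs_mul_pow hr0 hr1) (norm_cantorPoint_term_le hr0 a)

lemma continuous_cantorPoint (hr0 : 0 ≤ r) (hr1 : r < 1) : Continuous (cantorPoint r M) :=
  continuous_tsum
    (fun n ↦ (continuous_of_discreteTopology
      (f := fun b : Bool ↦ bif b then (1 - r) * M * r ^ n else 0)).comp (continuous_apply n))
    (summable_abs_mul_pow hr0 hr1) fun n a ↦ norm_cantorPoint_term_le hr0 a n

lemma cantorPoint_eq_cantorBranch (hr0 : 0 ≤ r) (hr1 : r < 1) (a : ℕ → Bool) :
    cantorPoint r M a = cantorBranch r M (a 0) (cantorPoint r M fun n ↦ a (n + 1)) := by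
  rw [cantorPoint, (summable_cantorPoint hr0 hr1 a).tsum_eq_zero_add, cantorBranch, cantorPoint,
    ← tsum_mul_left, pow_zero, mul_one]
  congr 2 with n
  cases a (n + 1)
  · simp only [cond_false, mul_zero]
  · simp only [cond_true]
    ring

lemma cantorPoint_false : cantorPoint r M (fun _ ↦ false) = 0 := by
  simp only [cantorPoint, cond_false, tsum_zero]

lemma cantorPoint_true (hr0 : 0 ≤ r) (hr1 : r < 1) : cantorPoint r M (fun _ ↦ true) = M := by
  have hr : 1 - r ≠ 0 := (sub_pos.2 hr1).ne'
  simp only [cantorPoint, cond_true, tsum_mul_left, tsum_geometric_of_lt_one hr0 hr1]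
  field_simp

lemma cantorPoint_mem_Icc (hr0 : 0 ≤ r) (hr1 : r < 1) (hM : 0 ≤ M) (a : ℕ → Bool) :
    cantorPoint r M a ∈ Set.Icc 0 M := by
  have hterm (n : ℕ) : 0 ≤ (1 - r) * M * r ^ n :=
    mul_nonneg (mul_nonneg (sub_pos.2 hr1).le hM) (pow_nonneg hr0 n)
  constructor
  · refine tsum_nonneg fun n ↦ ?_
    cases a n
    exacts [le_rfl, hterm n]
  · conv_rhs => rw [← cantorPoint_true (M := M) hr0 hr1]
    refine (summable_cantorPoint hr0 hr1 a).tsum_le_tsum (fun n ↦ ?_)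
      (summable_cantorPoint hr0 hr1 _)
    cases a n
    exacts [hterm n, le_rfl]

-- The difference `D` satisfies `|D a| = r |D (tail a)|`, hence `sup |D| ≤ r sup |D|`.
lemma eq_cantorPoint_of_forall_eq_cantorBranch (hr0 : 0 ≤ r) (hr1 : r < 1)
    {Φ : (ℕ → Bool) → ℝ} (hΦ : Continuous Φ)
    (h : ∀ a, Φ a = cantorBranch r M (a 0) (Φ fun n ↦ a (n + 1))) : Φ = cantorPoint r M := by
  have hbdd : BddAbove (Set.range fun a ↦ dist (Φ a) (cantorPoint r M a)) :=
    (isCompact_range (hΦ.dist (continuous_cantorPoint hr0 hr1))).bddAbove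
  set B : ℝ := ⨆ a, dist (Φ a) (cantorPoint r M a)
  have hle (a) : dist (Φ a) (cantorPoint r M a) ≤ B := le_ciSup hbdd a
  have hB : B ≤ r * B := ciSup_le fun a ↦ by
    rw [h, cantorPoint_eq_cantorBranch hr0 hr1, dist_cantorBranch hr0]
    exact mul_le_mul_of_nonneg_left (hle _) hr0
  have hB0 : B ≤ 0 := by nlinarith
  exact funext fun a ↦ dist_le_zero.1 ((hle a).trans hB0)

lemma isCompact_centralCantorSet (hr0 : 0 ≤ r) (hr1 : r < 1) :
    IsCompact (centralCantorSet r M) :=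
  isCompact_range (continuous_cantorPoint hr0 hr1)

lemma centralCantorSet_nonempty : (centralCantorSet r M).Nonempty := Set.range_nonempty _

lemma centralCantorSet_subset_Icc (hr0 : 0 ≤ r) (hr1 : r < 1) (hM : 0 ≤ M) :
    centralCantorSet r M ⊆ Set.Icc 0 M :=
  Set.range_subset_iff.2 (cantorPoint_mem_Icc hr0 hr1 hM)

lemma zero_mem_centralCantorSet : 0 ∈ centralCantorSet r M := ⟨_, cantorPoint_false⟩

lemma right_mem_centralCantorSet (hr0 : 0 ≤ r) (hr1 : r < 1) : M ∈ centralCantorSet r M :=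
  ⟨_, cantorPoint_true hr0 hr1⟩

lemma cantorBranch_mem_centralCantorSet (hr0 : 0 ≤ r) (hr1 : r < 1) (b : Bool) {x : ℝ}
    (hx : x ∈ centralCantorSet r M) : cantorBranch r M b x ∈ centralCantorSet r M := by
  obtain ⟨a, rfl⟩ := hx
  exact ⟨fun n ↦ Nat.casesOn n b a, cantorPoint_eq_cantorBranch hr0 hr1 _⟩

lemma exists_eq_cantorBranch_of_mem_centralCantorSet (hr0 : 0 ≤ r) (hr1 : r < 1) {x : ℝ}
    (hx : x ∈ centralCantorSet r M) :
    ∃ b, ∃ y ∈ centralCantorSet r M, x = cantorBranch r M b y := by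
  obtain ⟨a, rfl⟩ := hx
  exact ⟨a 0, _, ⟨_, rfl⟩, cantorPoint_eq_cantorBranch hr0 hr1 a⟩

lemma volume_image_cantorBranch (hr0 : 0 ≤ r) (b : Bool) (s : Set ℝ) :
    volume (cantorBranch r M b '' s) = ENNReal.ofReal r * volume s := by
  have himage : cantorBranch r M b '' s =
      (fun x ↦ (bif b then (1 - r) * M else 0) + x) '' ((fun x ↦ r • x) '' s) := by
    rw [Set.image_image]
    rfl
  rw [himage, Set.image_add_left, measure_preimage_add, Set.image_smul, Measure.addHaar_smul,
    Module.finrank_self, pow_one, abs_of_nonneg hr0]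

lemma volume_centralCantorSet (hr0 : 0 ≤ r) (hr2 : r < 1 / 2) :
    volume (centralCantorSet r M) = 0 := by
  have hr1 : r < 1 := by linarith
  set K := centralCantorSet r M
  have hfinite : volume K ≠ ⊤ := (isCompact_centralCantorSet hr0 hr1).measure_lt_top.ne
  have hcover : K ⊆ cantorBranch r M false '' K ∪ cantorBranch r M true '' K := by
    intro x hx
    obtain ⟨b, y, hy, rfl⟩ := exists_eq_cantorBranch_of_mem_centralCantorSet hr0 hr1 hx
    cases b
    exacts [.inl ⟨y, hy, rfl⟩, .inr ⟨y, hy, rfl⟩]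
  have hle : volume K ≤ ENNReal.ofReal r * volume K + ENNReal.ofReal r * volume K := by
    simpa only [volume_image_cantorBranch hr0] using
      (measure_mono hcover).trans (measure_union_le (μ := volume) _ _)
  have hreal : volume.real K ≤ r * volume.real K + r * volume.real K := by
    simpa only [Measure.real, ENNReal.toReal_add (ENNReal.mul_ne_top ENNReal.ofReal_ne_top hfinite)
      (ENNReal.mul_ne_top ENNReal.ofReal_ne_top hfinite), ENNReal.toReal_mul,
      ENNReal.toReal_ofReal hr0] using ENNReal.toReal_mono (by finiteness) hle
  have hzero : volume.real K = 0 := by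
    nlinarith [measureReal_nonneg (μ := volume) (s := K)]
  exact (measureReal_eq_zero_iff hfinite).1 hzero

lemma mul_infDist_le_dist_cantorBranch (hr0 : 0 ≤ r) (hr2 : r ≤ 1 / 2) {x y : ℝ}
    (hx : x ∈ Set.Icc 0 M) (hy : y ∈ centralCantorSet r M) (b c : Bool) :
    r * Metric.infDist x (centralCantorSet r M) ≤
      dist (cantorBranch r M b x) (cantorBranch r M c y) := by
  have hr1 : r < 1 := by linarith
  obtain ⟨hx0, hxM⟩ := hx
  obtain ⟨hy0, hyM⟩ := centralCantorSet_subset_Icc hr0 hr1 (hx0.trans hxM) hy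
  have hle {z : ℝ} (hz : z ∈ centralCantorSet r M) :
      r * Metric.infDist x (centralCantorSet r M) ≤ r * dist x z :=
    mul_le_mul_of_nonneg_left (Metric.infDist_le_dist_of_mem hz) hr0
  have hry0 : 0 ≤ r * y := mul_nonneg hr0 hy0
  have hryM : r * y ≤ r * M := mul_le_mul_of_nonneg_left hyM hr0
  have hgap : r * M ≤ (1 - r) * M := by nlinarith
  -- In distinct halves, the endpoint of `[0, M]` facing the other half is at least as close.
  cases b <;> cases c
  · exact (hle hy).trans_eq (dist_cantorBranch hr0 _ _ _).symm
  · calc r * Metric.infDist x (centralCantorSet r M)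
        ≤ r * dist x M := hle (right_mem_centralCantorSet hr0 hr1)
      _ = r * (M - x) := by rw [dist_comm, Real.dist_eq, abs_of_nonneg (sub_nonneg.2 hxM)]
      _ ≤ cantorBranch r M true y - cantorBranch r M false x := by
        simp only [cantorBranch, cond_true, cond_false]
        linarith
      _ ≤ dist (cantorBranch r M false x) (cantorBranch r M true y) := by
        rw [dist_comm]
        exact le_abs_self _
  · calc r * Metric.infDist x (centralCantorSet r M)
        ≤ r * dist x 0 := hle zero_mem_centralCantorSet
      _ = r * x := by rw [Real.dist_eq, sub_zero, abs_of_nonneg hx0]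
      _ ≤ cantorBranch r M true x - cantorBranch r M false y := by
        simp only [cantorBranch, cond_true, cond_false]
        linarith
      _ ≤ dist (cantorBranch r M true x) (cantorBranch r M false y) := le_abs_self _
  · exact (hle hy).trans_eq (dist_cantorBranch hr0 _ _ _).symm

lemma infDist_cantorBranch (hr0 : 0 ≤ r) (hr2 : r ≤ 1 / 2) (b : Bool) {x : ℝ}
    (hx : x ∈ Set.Icc 0 M) :
    Metric.infDist (cantorBranch r M b x) (centralCantorSet r M) =
      r * Metric.infDist x (centralCantorSet r M) := by
  have hr1 : r < 1 := by linarith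
  apply le_antisymm
  · obtain ⟨y, hy, hxy⟩ :=
      (isCompact_centralCantorSet (M := M) hr0 hr1).exists_infDist_eq_dist
        centralCantorSet_nonempty x
    rw [hxy, ← dist_cantorBranch hr0 b]
    exact Metric.infDist_le_dist_of_mem (cantorBranch_mem_centralCantorSet hr0 hr1 b hy)
  · refine (Metric.le_infDist centralCantorSet_nonempty).2 fun z hz ↦ ?_
    obtain ⟨c, y, hy, rfl⟩ := exists_eq_cantorBranch_of_mem_centralCantorSet hr0 hr1 hz
    exact mul_infDist_le_dist_cantorBranch hr0 hr2 hx hy b c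

lemma infDist_rpow_eq_zero_iff_mem_centralCantorSet (hr0 : 0 ≤ r) (hr1 : r < 1) {p : ℝ}
    (hp : p ≠ 0) {x : ℝ} :
    Metric.infDist x (centralCantorSet r M) ^ p = 0 ↔ x ∈ centralCantorSet r M := by
  rw [Real.rpow_eq_zero Metric.infDist_nonneg hp,
    (isCompact_centralCantorSet hr0 hr1).isClosed.mem_iff_infDist_zero centralCantorSet_nonempty]

lemma cantorPoint_one_third (a : ℕ → Bool) :
    cantorPoint (1 / 3) 1 a = Real.ofDigits fun n ↦ bif a n then (2 : Fin 3) else 0 := by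
  rw [cantorPoint, Real.ofDigits]
  congr 1 with n
  cases h : a n
  · simp [Real.ofDigitsTerm, h]
  · simp only [Real.ofDigitsTerm, h, cond_true, Fin.val_two, Nat.cast_ofNat, one_div, inv_pow,
      pow_succ, mul_inv]
    ring

lemma centralCantorSet_one_third : centralCantorSet (1 / 3) 1 = cantorSet := by
  ext x
  constructor
  · rintro ⟨a, rfl⟩
    rw [cantorPoint_one_third]
    exact ofDigits_bool_to_fin_three_mem_cantorSet a
  · intro hx
    refine ⟨cantorSetEquivNatToBool ⟨x, hx⟩, ?_⟩
    rw [cantorPoint_one_third]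
    exact congrArg Subtype.val (cantorSetEquivNatToBool.symm_apply_apply ⟨x, hx⟩)

end CentralCantorSet

section SelfSimilarDensity

variable {r M ρ : ℝ} {g : ℝ → ℝ}

lemma integral_cantorBranch_sub (hg : Continuous g) (b : Bool)
    (hscale : ∀ x ∈ Set.Icc 0 M, g (cantorBranch r M b x) = ρ * g x) {x : ℝ}
    (hx : x ∈ Set.Icc 0 M) :
    (∫ t in 0..cantorBranch r M b x, g t) - ∫ t in 0..cantorBranch r M b 0, g t =
      r * ρ * ∫ t in 0..x, g t := by
  have hcongr : ∫ t in 0..x, g (cantorBranch r M b t) = ∫ t in 0..x, ρ * g t := by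
    refine intervalIntegral.integral_congr fun t ht ↦ ?_
    rw [Set.uIcc_of_le hx.1] at ht
    exact hscale t ⟨ht.1, ht.2.trans hx.2⟩
  calc (∫ t in 0..cantorBranch r M b x, g t) - ∫ t in 0..cantorBranch r M b 0, g t
      = ∫ t in cantorBranch r M b 0..cantorBranch r M b x, g t :=
        intervalIntegral.integral_interval_sub_left (hg.intervalIntegrable _ _)
          (hg.intervalIntegrable _ _)
    _ = r * ∫ t in 0..x, g (cantorBranch r M b t) :=
        (intervalIntegral.mul_integral_comp_add_mul _ _).symm
    _ = r * ρ * ∫ t in 0..x, g t := by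
        rw [hcongr, intervalIntegral.integral_const_mul, mul_assoc]

lemma integral_cantorBranch (hg : Continuous g)
    (hscale : ∀ b, ∀ x ∈ Set.Icc 0 M, g (cantorBranch r M b x) = ρ * g x) (b : Bool) {x : ℝ}
    (hx : x ∈ Set.Icc 0 M) :
    ∫ t in 0..cantorBranch r M b x, g t =
      cantorBranch (r * ρ) (∫ t in 0..M, g t) b (∫ t in 0..x, g t) := by
  have hbx := integral_cantorBranch_sub hg b (hscale b) hx
  cases b
  · simpa [cantorBranch] using hbx
  · have hM : cantorBranch r M true M = M := by
      simp only [cantorBranch, cond_true]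
      ring
    have hbM := integral_cantorBranch_sub hg true (hscale true) ⟨hx.1.trans hx.2, le_rfl⟩
    rw [hM] at hbM
    simp only [cantorBranch, cond_true] at hbx hbM ⊢
    linarith

lemma image_integral_centralCantorSet (hr0 : 0 ≤ r) (hr1 : r < 1) (hM : 0 ≤ M) (hρ0 : 0 ≤ ρ)
    (hρ1 : r * ρ < 1) (hg : Continuous g)
    (hscale : ∀ b, ∀ x ∈ Set.Icc 0 M, g (cantorBranch r M b x) = ρ * g x) :
    (fun x ↦ ∫ t in 0..x, g t) '' centralCantorSet r M =
      centralCantorSet (r * ρ) (∫ t in 0..M, g t) := by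
  rw [centralCantorSet, centralCantorSet, ← Set.range_comp]
  congr 1
  refine eq_cantorPoint_of_forall_eq_cantorBranch (mul_nonneg hr0 hρ0) hρ1
    ((intervalIntegral.continuous_primitive (fun _ _ ↦ hg.intervalIntegrable _ _) 0).comp
      (continuous_cantorPoint hr0 hr1)) fun a ↦ ?_
  rw [Function.comp_apply, cantorPoint_eq_cantorBranch hr0 hr1]
  exact integral_cantorBranch hg hscale _ (cantorPoint_mem_Icc hr0 hr1 hM _)

end SelfSimilarDensity

/-- The density proportional to the `α`-th power of the distance to `centralCantorSet r M`,
normalised to have integral `1` over `[0, M]`. -/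
noncomputable def cantorDensity (r M α x : ℝ) : ℝ :=
  Metric.infDist x (centralCantorSet r M) ^ α /
    ∫ t in 0..M, Metric.infDist t (centralCantorSet r M) ^ α

section CantorDensity

variable {r M α : ℝ}

lemma continuous_infDist_centralCantorSet_rpow (hα : 0 ≤ α) :
    Continuous fun x ↦ Metric.infDist x (centralCantorSet r M) ^ α :=
  (Metric.continuous_infDist_pt _).rpow_const fun _ ↦ .inr hα

lemma integral_infDist_centralCantorSet_rpow_pos (hr0 : 0 ≤ r) (hr2 : r < 1 / 2) (hM : 0 < M)
    (hα : 0 < α) : 0 < ∫ t in 0..M, Metric.infDist t (centralCantorSet r M) ^ α := by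
  have hnull : volume {x | Metric.infDist x (centralCantorSet r M) ^ α = 0} = 0 := by
    simpa only [infDist_rpow_eq_zero_iff_mem_centralCantorSet hr0 (hr2.trans one_half_lt_one)
      hα.ne', Set.ofPred_mem_eq] using volume_centralCantorSet hr0 hr2
  simpa only [intervalIntegral.integral_same] using
    strictMono_integral_of_nonneg (continuous_infDist_centralCantorSet_rpow hα.le)
      (fun _ ↦ Real.rpow_nonneg Metric.infDist_nonneg _) hnull 0 hM

lemma continuous_cantorDensity (hα : 0 ≤ α) : Continuous (cantorDensity r M α) :=
  (continuous_infDist_centralCantorSet_rpow hα).div_const _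

lemma cantorDensity_nonneg (hM : 0 ≤ M) (x : ℝ) : 0 ≤ cantorDensity r M α x :=
  div_nonneg (Real.rpow_nonneg Metric.infDist_nonneg _)
    (intervalIntegral.integral_nonneg hM fun _ _ ↦ Real.rpow_nonneg Metric.infDist_nonneg _)

lemma integral_cantorDensity (hr0 : 0 ≤ r) (hr2 : r < 1 / 2) (hM : 0 < M) (hα : 0 < α) :
    ∫ t in 0..M, cantorDensity r M α t = 1 := by
  simp only [cantorDensity, intervalIntegral.integral_div]
  exact div_self (integral_infDist_centralCantorSet_rpow_pos hr0 hr2 hM hα).ne'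

lemma cantorDensity_eq_zero_iff (hr0 : 0 ≤ r) (hr2 : r < 1 / 2) (hM : 0 < M) (hα : 0 < α)
    {x : ℝ} : cantorDensity r M α x = 0 ↔ x ∈ centralCantorSet r M := by
  rw [cantorDensity, div_eq_zero_iff,
    or_iff_left (integral_infDist_centralCantorSet_rpow_pos hr0 hr2 hM hα).ne',
    infDist_rpow_eq_zero_iff_mem_centralCantorSet hr0 (hr2.trans one_half_lt_one) hα.ne']

lemma setOf_cantorDensity_eq_zero (hr0 : 0 ≤ r) (hr2 : r < 1 / 2) (hM : 0 < M) (hα : 0 < α) :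
    {x ∈ Set.Icc 0 M | cantorDensity r M α x = 0} = centralCantorSet r M := by
  ext x
  rw [Set.mem_sep_iff, cantorDensity_eq_zero_iff hr0 hr2 hM hα]
  exact and_iff_right_of_imp
    fun hx ↦ centralCantorSet_subset_Icc hr0 (hr2.trans one_half_lt_one) hM.le hx

lemma cantorDensity_cantorBranch (hr0 : 0 ≤ r) (hr2 : r ≤ 1 / 2) (b : Bool) {x : ℝ}
    (hx : x ∈ Set.Icc 0 M) :
    cantorDensity r M α (cantorBranch r M b x) = r ^ α * cantorDensity r M α x := by
  rw [cantorDensity, cantorDensity, infDist_cantorBranch hr0 hr2 b hx,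
    Real.mul_rpow hr0 Metric.infDist_nonneg, mul_div_assoc]

lemma abs_cantorDensity_sub_le (hM : 0 ≤ M) (hα0 : 0 ≤ α) (hα1 : α ≤ 1) (x y : ℝ) :
    |cantorDensity r M α x - cantorDensity r M α y| ≤
      (∫ t in 0..M, Metric.infDist t (centralCantorSet r M) ^ α)⁻¹ * |x - y| ^ α := by
  have hI : 0 ≤ ∫ t in 0..M, Metric.infDist t (centralCantorSet r M) ^ α :=
    intervalIntegral.integral_nonneg hM fun _ _ ↦ Real.rpow_nonneg Metric.infDist_nonneg _
  rw [cantorDensity, cantorDensity, ← sub_div, abs_div, abs_of_nonneg hI, div_eq_inv_mul,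
    ← Real.dist_eq x y]
  exact mul_le_mul_of_nonneg_left (abs_infDist_rpow_sub_infDist_rpow_le hα0 hα1 _ x y)
    (inv_nonneg.2 hI)

lemma strictMono_integral_cantorDensity (hr0 : 0 ≤ r) (hr2 : r < 1 / 2) (hM : 0 < M)
    (hα : 0 < α) : StrictMono fun x ↦ ∫ t in 0..x, cantorDensity r M α t := by
  refine strictMono_integral_of_nonneg (continuous_cantorDensity hα.le)
    (cantorDensity_nonneg hM.le) ?_ 0
  simpa only [cantorDensity_eq_zero_iff hr0 hr2 hM hα, Set.ofPred_mem_eq] using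
    volume_centralCantorSet hr0 hr2

lemma image_integral_cantorDensity (hr0 : 0 ≤ r) (hr2 : r < 1 / 2) (hM : 0 < M) (hα : 0 < α) :
    (fun x ↦ ∫ t in 0..x, cantorDensity r M α t) '' centralCantorSet r M =
      centralCantorSet (r ^ (1 + α)) 1 := by
  have hr1 : r < 1 := hr2.trans one_half_lt_one
  have hmul : r * r ^ α = r ^ (1 + α) := (Real.rpow_one_add' hr0 (by positivity)).symm
  have hmul_lt : r * r ^ α < 1 := hmul ▸ Real.rpow_lt_one hr0 hr1 (by positivity)
  rw [image_integral_centralCantorSet hr0 hr1 hM.le (Real.rpow_nonneg hr0 α) hmul_lt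
    (continuous_cantorDensity hα.le) fun b _ ↦ cantorDensity_cantorBranch hr0 hr2.le b, hmul,
    integral_cantorDensity hr0 hr2 hM hα]

end CantorDensity

section Exponent

variable {α : ℝ}

lemma two_rpow_one_add_lt_three (hα : α < Real.log (3 / 2) / Real.log 2) :
    (2 : ℝ) ^ (1 + α) < 3 := by
  have hlog2 : 0 < Real.log 2 := Real.log_pos one_lt_two
  rw [lt_div_iff₀ hlog2, Real.log_div three_ne_zero two_ne_zero] at hα
  rw [Real.rpow_lt_iff_lt_log two_pos three_pos]
  linarith

lemma le_one_of_lt_log_div_log (hα : α < Real.log (3 / 2) / Real.log 2) : α ≤ 1 := by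
  have hlog2 : 0 < Real.log 2 := Real.log_pos one_lt_two
  exact hα.le.trans ((div_le_one hlog2).2 (Real.log_le_log (by norm_num) (by norm_num)))

lemma one_third_lt_half_rpow_one_add (hα : α < Real.log (3 / 2) / Real.log 2) :
    (1 / 3 : ℝ) < (1 / 2) ^ (1 + α) := by
  rw [Real.div_rpow zero_le_one zero_le_two, Real.one_rpow]
  exact one_div_lt_one_div_of_lt (by positivity) (two_rpow_one_add_lt_three hα)

lemma two_lt_three_rpow_one_div_one_add (hα0 : 0 < α)
    (hα : α < Real.log (3 / 2) / Real.log 2) : (2 : ℝ) < 3 ^ (1 / (1 + α)) := by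
  rw [one_div, Real.lt_rpow_inv_iff_of_pos zero_le_two zero_le_three (by positivity)]
  exact two_rpow_one_add_lt_three hα

end Exponent

theorem exists_C1_alpha_holder_deriv_image_cantorSet_general {α s M : ℝ} (hα0 : 0 < α)
    (hα1 : α ≤ 1) (hs0 : 0 ≤ s) (hs : s < (1 / 2) ^ (1 + α)) (hM : 0 < M) :
    ∃ f f' : ℝ → ℝ,
      StrictMonoOn f (Set.Icc 0 M) ∧
      Set.MapsTo f (Set.Icc 0 M) (Set.Icc 0 1) ∧
      (∀ x ∈ Set.Icc 0 M, HasDerivWithinAt f (f' x) (Set.Icc 0 M) x) ∧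
      ContinuousOn f' (Set.Icc 0 M) ∧
      (∃ K : ℝ, ∀ x ∈ Set.Icc 0 M, ∀ y ∈ Set.Icc 0 M,
        |f' x - f' y| ≤ K * |x - y| ^ α) ∧
      f 0 = 0 ∧ f M = 1 ∧
      volume {x ∈ Set.Icc 0 M | f' x = 0} = 0 ∧
      f '' {x ∈ Set.Icc 0 M | f' x = 0} = centralCantorSet s 1 := by
  set r : ℝ := s ^ (1 + α)⁻¹
  have hr0 : 0 ≤ r := Real.rpow_nonneg hs0 _
  have hr2 : r < 1 / 2 := (Real.rpow_inv_lt_iff_of_pos hs0 (by norm_num) (by positivity)).2 hs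
  have hrs : r ^ (1 + α) = s := Real.rpow_inv_rpow hs0 (by positivity)
  have hcont : Continuous (cantorDensity r M α) := continuous_cantorDensity hα0.le
  have hmono := strictMono_integral_cantorDensity hr0 hr2 hM hα0
  have hleft : ∫ t in 0..0, cantorDensity r M α t = 0 := intervalIntegral.integral_same
  have hright := integral_cantorDensity hr0 hr2 hM hα0
  refine ⟨fun x ↦ ∫ t in 0..x, cantorDensity r M α t, cantorDensity r M α, hmono.strictMonoOn _,
    ?_, fun x _ ↦ (hcont.integral_hasStrictDerivAt 0 x).hasDerivAt.hasDerivWithinAt,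
    hcont.continuousOn, ⟨_, fun x _ y _ ↦ abs_cantorDensity_sub_le hM.le hα0.le hα1 x y⟩,
    hleft, hright, ?_⟩
  · simpa only [hleft, hright] using hmono.monotone.mapsTo_Icc (a := 0) (b := M)
  · rw [setOf_cantorDensity_eq_zero hr0 hr2 hM hα0, image_integral_cantorDensity hr0 hr2 hM hα0,
      hrs]
    exact ⟨volume_centralCantorSet hr0 hr2, rfl⟩

/-- For every `0 < α < log(3/2)/log 2`, with `M_α = 1/(3^{1/(1+α)} - 2)`, there is a
strictly increasing `C¹` function `f : [0, M_α] → [0, 1]` whose derivative is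
`α`-Hölder continuous, with `f 0 = 0`, `f M_α = 1`, whose critical set
`A = {x ∈ [0, M_α] : f' x = 0}` is Lebesgue-null and satisfies `f(A) = C`,
the Cantor ternary set. -/
theorem exists_C1_alpha_holder_deriv_image_cantorSet (α : ℝ) (hα0 : 0 < α)
    (hα : α < Real.log (3 / 2) / Real.log 2) :
    ∃ (M : ℝ), M = 1 / ((3 : ℝ) ^ (1 / (1 + α)) - 2) ∧
    ∃ f f' : ℝ → ℝ,
      StrictMonoOn f (Set.Icc 0 M) ∧
      Set.MapsTo f (Set.Icc 0 M) (Set.Icc 0 1) ∧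
      (∀ x ∈ Set.Icc 0 M, HasDerivWithinAt f (f' x) (Set.Icc 0 M) x) ∧
      ContinuousOn f' (Set.Icc 0 M) ∧
      (∃ K : ℝ, ∀ x ∈ Set.Icc 0 M, ∀ y ∈ Set.Icc 0 M,
        |f' x - f' y| ≤ K * |x - y| ^ α) ∧
      f 0 = 0 ∧ f M = 1 ∧
      volume {x ∈ Set.Icc 0 M | f' x = 0} = 0 ∧
      f '' {x ∈ Set.Icc 0 M | f' x = 0} = cantorSet := by
  rw [← centralCantorSet_one_third]
  exact ⟨_, rfl, exists_C1_alpha_holder_deriv_image_cantorSet_general hα0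
    (le_one_of_lt_log_div_log hα) (by norm_num) (one_third_lt_half_rpow_one_add hα)
    (one_div_pos.2 (sub_pos.2 (two_lt_three_rpow_one_div_one_add hα0 hα)))⟩
end
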